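/- The matrix-valued polynomials P_n satisfy P_0(x) = I and the three-term recurrence relation x·P_n(x) = P_{n+1}(x)·A_n + P_n(x)·B_n + P_{n-1}(x)·C_n for all n ≥ 0 (with P_{-1} := 0), where A_n = Σ_{i=0}^{2ℓ} (1/(2q))·(1-q^{2n+2})(1-q^{4ℓ+2n+4})/((1-q^{2i+2n+2})(1-q^{4ℓ-2i+2n+2}))·E_{i,i}, B_n = Σ_{i=0}^{2ℓ-1} (q^{2n+1}/2)·(1-q^{4ℓ-2i})(1-q^{2i+2})/((1-q^{4ℓ+2n-2i})(1-q^{2n+2i+4}))·E_{i,i+1} + Σ_{i=1}^{2ℓ} (q^{2n+1}/2)·(1-q^{2i})(1-q^{4ℓ-2i+2})/((1-q^{2n+2i})(1-q^{4ℓ-2i+2n+4}))·E_{i,i-1}, and C_n = Σ_{i=0}^{2ℓ} (q/2)·(1-q^{2n})(1-q^{4ℓ+2n+2})/((1-q^{2n+2i+2})(1-q^{4ℓ+2n-2i+2}))·E_{i,i}. -/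

import Mathlib

open Finset Polynomial MeasureTheory Matrix
open scoped BigOperators ComplexOrder

noncomputable section

/-- q-shifted factorial `(a;p)_n`. -/
def qp (a p : ℂ) (n : ℕ) : ℂ := ∏ j ∈ Finset.range n, (1 - a * p ^ j)

/-- q-Racah polynomial `R_n(μ(x);α,β,γ,δ;p)`. -/
def qRacah (p α β γ δ : ℂ) (n x : ℕ) : ℂ :=
  ∑ k ∈ Finset.range (min n x + 1),
    qp (p ^ (-(n : ℤ))) p k * qp (α * β * p ^ (n + 1)) p k *
        qp (p ^ (-(x : ℤ))) p k * qp (γ * δ * p ^ (x + 1)) p k /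
      (qp (α * p) p k * qp (β * δ * p) p k * qp (γ * p) p k * qp p p k) * p ^ k

/-- `IsUltra C` says that for each base `p`, parameter `β` and degree `n`, `C p β n` is
the continuous q-ultraspherical polynomial: it has degree at most `n` and its values at
`(z+z⁻¹)/2` are given by the symmetric Laurent sum. -/
def IsUltra (C : ℂ → ℂ → ℕ → Polynomial ℂ) : Prop :=
  ∀ (p β : ℂ) (n : ℕ),
    (C p β n).degree ≤ (n : ℕ) ∧
      ∀ z : ℂ, z ≠ 0 →
        (C p β n).eval ((z + z⁻¹) / 2) =
          ∑ r ∈ Finset.range (n + 1),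
            qp β p r * qp β p (n - r) / (qp p p r * qp p p (n - r)) * z ^ ((n : ℤ) - 2 * r)

/-- The matrix-valued polynomial `P_n` (entries in `Polynomial ℂ`); here `L = 2ℓ`. -/
def Pm (q : ℂ) (L : ℕ) (C : ℂ → ℂ → ℕ → Polynomial ℂ) (n : ℕ) :
    Matrix (Fin (L + 1)) (Fin (L + 1)) (Polynomial ℂ) :=
  Matrix.of fun i j =>
    ∑ k ∈ Finset.Icc (i : ℕ) (min L (n + (j : ℕ))),
      Polynomial.C
          ((-1 : ℂ) ^ k *
            q ^ ((n : ℤ) + (2 * (k : ℤ) + 1) * ((k : ℤ) - ((i : ℕ) : ℤ)) +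
                ((j : ℕ) : ℤ) * (2 * (k : ℤ) + 1) + 2 * (k : ℤ) * ((L : ℤ) + (n : ℤ) + 1) -
                (k : ℤ) ^ 2) *
            (qp (q ^ 2) (q ^ 2) k * qp (q ^ 2) (q ^ 2) (k + (i : ℕ)) /
              (qp (q ^ 2) (q ^ 2) (2 * k) * qp (q ^ 2) (q ^ 2) (i : ℕ))) *
            (qp (q ^ (-(2 * (L : ℤ)))) (q ^ 2) k *
                qp (q ^ (-(2 * ((j : ℕ) : ℤ) + 2 * (n : ℤ)))) (q ^ 2) k /
              (qp (q ^ 2) (q ^ 2) k * qp (q ^ (2 * (L : ℤ) + 4)) (q ^ 2) k)) *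
            (qp (q ^ 2) (q ^ 2) (n + (j : ℕ) - k) /
              qp (q ^ (4 * (k : ℤ) + 4)) (q ^ 2) (n + (j : ℕ) - k)) *
            qRacah (q ^ 2) 1 1 (q ^ (-(2 * (n : ℤ) + 2 * ((j : ℕ) : ℤ) + 2)))
              (q ^ (-(2 * (L : ℤ) + 2))) k (j : ℕ)) *
        (C (q ^ 2) (q ^ (-(2 * (k : ℤ)))) (k - (i : ℕ)) *
          C (q ^ 2) (q ^ (2 * (k : ℤ) + 2)) (n + (j : ℕ) - k))

/-- Evaluation of the matrix-valued polynomial `P_n` at a point. -/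
def evP (q : ℂ) (L : ℕ) (C : ℂ → ℂ → ℕ → Polynomial ℂ) (n : ℕ) (x : ℂ) :
    Matrix (Fin (L + 1)) (Fin (L + 1)) ℂ :=
  (Pm q L C n).map (Polynomial.eval x)

/-- The coefficients `α_t(m,n)` of the weight. -/
def alphaC (q : ℂ) (L m n t : ℕ) : ℂ :=
  q ^ (2 * (n : ℤ) * ((L : ℤ) + 1) - (n : ℤ) ^ 2 - (2 * (L : ℤ) + 3) * (t : ℤ) + (t : ℤ) ^ 2 -
      (L : ℤ) + (m : ℤ)) *
    ((1 - q ^ (2 * (L : ℤ) + 2)) / (1 - q ^ (2 * (m : ℤ) + 2))) *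
    (qp (q ^ 2) (q ^ 2) (L - n) * qp (q ^ 2) (q ^ 2) n / qp (q ^ 2) (q ^ 2) L) *
    ((-1 : ℂ) ^ ((m : ℤ) - (t : ℤ)) * qp (q ^ (2 * (m : ℤ) - 2 * (L : ℤ))) (q ^ 2) (n - t) /
      qp (q ^ (2 * (m : ℤ) + 4)) (q ^ 2) (n - t)) *
    (qp (q ^ (2 * (L : ℤ) + 4 - 2 * (t : ℤ))) (q ^ 2) t / qp (q ^ 2) (q ^ 2) t)

/-- The matrix weight `W(x)`. -/
def Wm (q : ℂ) (L : ℕ) (x : ℂ) : Matrix (Fin (L + 1)) (Fin (L + 1)) ℂ :=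
  Matrix.of fun i j =>
    ∑ t ∈ Finset.range (max (i : ℕ) (j : ℕ) + 1),
      alphaC q L (min (i : ℕ) (j : ℕ)) (max (i : ℕ) (j : ℕ)) t *
        (Polynomial.Chebyshev.U ℂ
            ((min (i : ℕ) (j : ℕ) : ℤ) + (max (i : ℕ) (j : ℕ) : ℤ) - 2 * (t : ℤ))).eval x

/-- The antidiagonal involution `J`. -/
def Jm (L : ℕ) : Matrix (Fin (L + 1)) (Fin (L + 1)) ℂ :=
  Matrix.of fun i j => if (i : ℕ) + (j : ℕ) = L then 1 else 0

/-- The diagonal leading-coefficient matrix `Γ_n`. -/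
def Gam (q : ℂ) (L n : ℕ) : Matrix (Fin (L + 1)) (Fin (L + 1)) ℂ :=
  Matrix.diagonal fun i =>
    2 ^ n * q ^ n * qp (q ^ (2 * ((i : ℕ) : ℤ) + 2)) (q ^ 2) n *
        qp (q ^ (2 * (L : ℤ) - 2 * ((i : ℕ) : ℤ) + 2)) (q ^ 2) n /
      (qp (q ^ 2) (q ^ 2) n * qp (q ^ (2 * (L : ℤ) + 4)) (q ^ 2) n)

/-- The squared-norm matrix `G_m`. -/
def Gmat (q : ℂ) (L m : ℕ) : Matrix (Fin (L + 1)) (Fin (L + 1)) ℂ :=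
  Matrix.diagonal fun i =>
    q ^ (2 * (m : ℤ) - (L : ℤ)) * (1 - q ^ (2 * (L : ℤ) + 2)) ^ 2 /
      ((1 - q ^ (2 * (m : ℤ) + 2 * ((i : ℕ) : ℤ) + 2)) *
        (1 - q ^ (2 * (L : ℤ) - 2 * ((i : ℕ) : ℤ) + 2 * (m : ℤ) + 2)))

/-- The unipotent lower triangular matrix `L(x)` of the LDU decomposition. -/
def Lm (q : ℂ) (L : ℕ) (C : ℂ → ℂ → ℕ → Polynomial ℂ) (x : ℂ) :
    Matrix (Fin (L + 1)) (Fin (L + 1)) ℂ :=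
  Matrix.of fun m k =>
    if (k : ℕ) ≤ (m : ℕ) then
      q ^ (((m : ℕ) : ℤ) - ((k : ℕ) : ℤ)) * qp (q ^ 2) (q ^ 2) (m : ℕ) *
          qp (q ^ 2) (q ^ 2) (2 * (k : ℕ) + 1) /
          (qp (q ^ 2) (q ^ 2) ((m : ℕ) + (k : ℕ) + 1) * qp (q ^ 2) (q ^ 2) (k : ℕ)) *
        (C (q ^ 2) (q ^ (2 * (k : ℕ) + 2)) ((m : ℕ) - (k : ℕ))).eval x
    else 0

/-- The claimed inverse of `L(x)`. -/
def Linv (q : ℂ) (L : ℕ) (C : ℂ → ℂ → ℕ → Polynomial ℂ) (x : ℂ) :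
    Matrix (Fin (L + 1)) (Fin (L + 1)) ℂ :=
  Matrix.of fun k n =>
    if (n : ℕ) ≤ (k : ℕ) then
      q ^ ((2 * ((k : ℕ) : ℤ) + 1) * (((k : ℕ) : ℤ) - ((n : ℕ) : ℤ))) *
          qp (q ^ 2) (q ^ 2) (k : ℕ) * qp (q ^ 2) (q ^ 2) ((k : ℕ) + (n : ℕ)) /
          (qp (q ^ 2) (q ^ 2) (2 * (k : ℕ)) * qp (q ^ 2) (q ^ 2) (n : ℕ)) *
        (C (q ^ 2) (q ^ (-(2 * ((k : ℕ) : ℤ)))) ((k : ℕ) - (n : ℕ))).eval x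
    else 0

/-- The constants `c_k(ℓ)`. -/
def ckC (q : ℂ) (L k : ℕ) : ℂ :=
  q ^ (-(L : ℤ)) / 4 * (1 - q ^ (4 * k + 2)) * qp (q ^ 2) (q ^ 2) (L + k + 1) *
      qp (q ^ 2) (q ^ 2) (L - k) * qp (q ^ 2) (q ^ 2) k ^ 4 /
    (qp (q ^ 2) (q ^ 2) (2 * k + 1) ^ 2 * qp (q ^ 2) (q ^ 2) L ^ 2)

/-- The diagonal part `T(x)` of the LDU decomposition. -/
def Tm (q : ℂ) (L : ℕ) (x : ℂ) : Matrix (Fin (L + 1)) (Fin (L + 1)) ℂ :=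
  Matrix.diagonal fun k =>
    ckC q L (k : ℕ) *
      (4 * ∏ j ∈ Finset.Icc 1 (k : ℕ), (1 - 2 * (2 * x ^ 2 - 1) * q ^ (2 * j) + q ^ (4 * j)))

/-- The coefficient matrix `M₁(z)` of the q-difference operator `D₁`. -/
def M1f (q : ℂ) (L : ℕ) (z : ℂ) : Matrix (Fin (L + 1)) (Fin (L + 1)) ℂ :=
  Matrix.of fun i j =>
    if (j : ℕ) = (i : ℕ) + 1 then
      -(q ^ (1 - ((i : ℕ) : ℤ)) * (1 - q ^ (2 * (i : ℕ) + 2)) / (1 - q ^ 2) ^ 2 *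
        (z / (1 - z ^ 2)))
    else if (j : ℕ) = (i : ℕ) then
      q ^ (1 - ((i : ℕ) : ℤ)) / (1 - q ^ 2) ^ 2 *
        ((1 - q ^ (2 * (i : ℕ) + 2) * z ^ 2) / (1 - z ^ 2))
    else 0

/-- `M₂(z) = J M₁(z) J`. -/
def M2f (q : ℂ) (L : ℕ) (z : ℂ) : Matrix (Fin (L + 1)) (Fin (L + 1)) ℂ :=
  Jm L * M1f q L z * Jm L

/-- The eigenvalue matrix `Λ_n(1)`. -/
def Lam1 (q : ℂ) (L n : ℕ) : Matrix (Fin (L + 1)) (Fin (L + 1)) ℂ :=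
  Matrix.diagonal fun j =>
    (q ^ (-((j : ℕ) : ℤ) - (n : ℤ) - 1) + q ^ (((j : ℕ) : ℤ) + (n : ℤ) + 1)) / (q⁻¹ - q) ^ 2

/-- The eigenvalue matrix `Λ_n(2) = J Λ_n(1) J`. -/
def Lam2 (q : ℂ) (L n : ℕ) : Matrix (Fin (L + 1)) (Fin (L + 1)) ℂ :=
  Jm L * Lam1 q L n * Jm L

/-- The diagonal coefficient matrix `K₁(z)` of the decoupled operator. -/
def K1f (q : ℂ) (L : ℕ) (z : ℂ) : Matrix (Fin (L + 1)) (Fin (L + 1)) ℂ :=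
  Matrix.diagonal fun i =>
    q ^ (1 - ((i : ℕ) : ℤ)) / (1 - q ^ 2) ^ 2 *
      ((1 - q ^ (2 * (i : ℕ) + 2) * z ^ 2) / (1 - z ^ 2))

/-- The symmetric Laurent polynomial `Ĉ_k(z;β|p)`. -/
def Chat (p β : ℂ) (k : ℕ) (z : ℂ) : ℂ :=
  ∑ r ∈ Finset.range (k + 1),
    qp β p r * qp β p (k - r) / (qp p p r * qp p p (k - r)) * z ^ ((k : ℤ) - 2 * (r : ℤ))

/-- The matrix polynomials `R_n(x) = L(x)ᵀ P_n(x) Γ_n⁻¹`. -/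
def Rmat (q : ℂ) (L : ℕ) (C : ℂ → ℂ → ℕ → Polynomial ℂ) (n : ℕ) (x : ℂ) :
    Matrix (Fin (L + 1)) (Fin (L + 1)) ℂ :=
  (Lm q L C x)ᵀ * evP q L C n x * (Gam q L n)⁻¹


/-- The matrix `A_n` of the three-term recurrence. -/
def Amat (q : ℂ) (L n : ℕ) : Matrix (Fin (L + 1)) (Fin (L + 1)) ℂ :=
  Matrix.diagonal fun i =>
    1 / (2 * q) * ((1 - q ^ (2 * (n : ℤ) + 2)) * (1 - q ^ (2 * (L : ℤ) + 2 * (n : ℤ) + 4))) /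
      ((1 - q ^ (2 * ((i : ℕ) : ℤ) + 2 * (n : ℤ) + 2)) *
        (1 - q ^ (2 * (L : ℤ) - 2 * ((i : ℕ) : ℤ) + 2 * (n : ℤ) + 2)))

/-- The matrix `B_n` of the three-term recurrence. -/
def Bmat (q : ℂ) (L n : ℕ) : Matrix (Fin (L + 1)) (Fin (L + 1)) ℂ :=
  Matrix.of fun i j =>
    if (j : ℕ) = (i : ℕ) + 1 then
      q ^ (2 * n + 1) / 2 *
          ((1 - q ^ (2 * (L : ℤ) - 2 * ((i : ℕ) : ℤ))) * (1 - q ^ (2 * ((i : ℕ) : ℤ) + 2))) /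
        ((1 - q ^ (2 * (L : ℤ) + 2 * (n : ℤ) - 2 * ((i : ℕ) : ℤ))) *
          (1 - q ^ (2 * (n : ℤ) + 2 * ((i : ℕ) : ℤ) + 4)))
    else if (i : ℕ) = (j : ℕ) + 1 then
      q ^ (2 * n + 1) / 2 *
          ((1 - q ^ (2 * ((i : ℕ) : ℤ))) * (1 - q ^ (2 * (L : ℤ) - 2 * ((i : ℕ) : ℤ) + 2))) /
        ((1 - q ^ (2 * (n : ℤ) + 2 * ((i : ℕ) : ℤ))) *
          (1 - q ^ (2 * (L : ℤ) - 2 * ((i : ℕ) : ℤ) + 2 * (n : ℤ) + 4)))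
    else 0

/-- The matrix `C_n` of the three-term recurrence. -/
def Cmat (q : ℂ) (L n : ℕ) : Matrix (Fin (L + 1)) (Fin (L + 1)) ℂ :=
  Matrix.diagonal fun i =>
    q / 2 * ((1 - q ^ (2 * (n : ℤ))) * (1 - q ^ (2 * (L : ℤ) + 2 * (n : ℤ) + 2))) /
      ((1 - q ^ (2 * (n : ℤ) + 2 * ((i : ℕ) : ℤ) + 2)) *
        (1 - q ^ (2 * (L : ℤ) + 2 * (n : ℤ) - 2 * ((i : ℕ) : ℤ) + 2)))


/-! ### Helper lemmas -/

def uu (p : ℂ) (m : ℕ) (j : ℤ) : ℂ := ∏ i ∈ Finset.range m, (1 - p ^ (j - (i : ℤ)))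

lemma qp_zero' (a p : ℂ) : qp a p 0 = 1 := by simp [qp]

lemma qp_succ' (a p : ℂ) (n : ℕ) : qp a p (n + 1) = qp a p n * (1 - a * p ^ n) := by
  simp [qp, Finset.prod_range_succ]

lemma F_succ (p : ℂ) (n : ℕ) : qp p p (n + 1) = qp p p n * (1 - p ^ (n + 1)) := by
  rw [qp_succ', pow_succ']

lemma F_ne {p : ℂ} (hp : ∀ n : ℕ, p ^ (n + 1) ≠ 1) (n : ℕ) : qp p p n ≠ 0 := by
  induction n with
  | zero => simp [qp]
  | succ n ih =>
    rw [F_succ]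
    exact mul_ne_zero ih (sub_ne_zero.mpr (hp n).symm)

lemma uu_zero (p : ℂ) (j : ℤ) : uu p 0 j = 1 := by simp [uu]

lemma uu_succ (p : ℂ) (m : ℕ) (j : ℤ) : uu p (m + 1) j = uu p m j * (1 - p ^ (j - (m : ℤ))) := by
  simp [uu, Finset.prod_range_succ]

lemma uu_succ' (p : ℂ) (m : ℕ) (j : ℤ) :
    uu p (m + 1) (j + 1) = (1 - p ^ (j + 1)) * uu p m j := by
  unfold uu
  rw [Finset.prod_range_succ', mul_comm]
  congr 1
  · simp
  · refine Finset.prod_congr rfl fun i _ => ?_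
    congr 2
    push_cast
    ring

lemma uu_lt (p : ℂ) {m j : ℕ} (h : j < m) : uu p m (j : ℤ) = 0 := by
  unfold uu
  exact Finset.prod_eq_zero (Finset.mem_range.mpr h) (by simp)

lemma uu_F (p : ℂ) {m N : ℕ} (h : m ≤ N) : uu p m (N : ℤ) * qp p p (N - m) = qp p p N := by
  induction m with
  | zero => simp [uu_zero]
  | succ m ih =>
    rw [← ih (by omega), uu_succ]
    obtain ⟨d, rfl⟩ : ∃ d, N = m + 1 + d := ⟨N - (m + 1), by omega⟩
    have h1 : m + 1 + d - m = d + 1 := by omega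
    have h2 : m + 1 + d - (m + 1) = d := by omega
    rw [h1, h2, F_succ]
    have h3 : (((m + 1 + d : ℕ) : ℤ) - (m : ℤ)) = ((d + 1 : ℕ) : ℤ) := by push_cast; ring
    rw [h3, zpow_natCast]
    ring

lemma qp_shift {p : ℂ} (a m : ℕ) : qp (p ^ (a + 1)) p m * qp p p a = qp p p (a + m) := by
  induction m with
  | zero => simp [qp_zero']
  | succ m ih =>
    rw [qp_succ', ← add_assoc, F_succ, ← ih]
    ring

lemma qp_neg {q : ℂ} (hq : q ≠ 0) (N m : ℕ) :
    qp ((q ^ 2) ^ (-(N : ℤ))) (q ^ 2) m =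
      (-1) ^ m * q ^ ((m : ℤ) ^ 2 - m - 2 * N * m) * uu (q ^ 2) m N := by
  induction m with
  | zero => simp [qp_zero', uu_zero]
  | succ m ih =>
    rw [qp_succ', ih, uu_succ]
    have e1 : (q ^ 2) ^ (-(N : ℤ)) * (q ^ 2) ^ m = q ^ (2 * (m : ℤ) - 2 * N) := by
      rw [← zpow_natCast (q ^ 2) m, ← zpow_natCast q 2, ← _root_.zpow_mul, ← _root_.zpow_mul, ← zpow_add₀ hq]
      congr 1
      push_cast
      ring
    have e2 : (q ^ 2) ^ ((N : ℤ) - m) = (q ^ (2 * (m : ℤ) - 2 * N))⁻¹ := by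
      rw [← zpow_natCast q 2, ← _root_.zpow_mul, ← _root_.zpow_neg]
      congr 1
      push_cast
      ring
    have e3 : q ^ (((m + 1 : ℕ) : ℤ) ^ 2 - ((m + 1 : ℕ) : ℤ) - 2 * N * ((m + 1 : ℕ) : ℤ))
        = q ^ ((m : ℤ) ^ 2 - m - 2 * N * m) * q ^ (2 * (m : ℤ) - 2 * N) := by
      rw [← zpow_add₀ hq]
      congr 1
      push_cast
      ring
    rw [e1, e2, e3]
    have h := zpow_ne_zero (2 * (m : ℤ) - 2 * N) hq
    generalize q ^ (2 * (m : ℤ) - 2 * N) = Y at *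
    field_simp
    ring

/-- The sum `S`. -/
def Sf (p : ℂ) (L k n j : ℕ) : ℂ :=
  ∑ m ∈ Finset.range (k + 1), qp (p ^ (-(k : ℤ))) p m * qp (p ^ (k + 1)) p m *
    (qp p p (L - m) / qp p p m ^ 2 * (uu p m j * uu p m ((n + L + 1 : ℕ) : ℤ) * qp p p (n + j - m)))

lemma qRacah_eq {q : ℂ} (hq : q ≠ 0) (hp : ∀ n : ℕ, (q ^ 2) ^ (n + 1) ≠ 1) (L k n j : ℕ)
    (hj : j ≤ L) :
    qRacah (q ^ 2) 1 1 (q ^ (-(2 * (n : ℤ) + 2 * (j : ℤ) + 2)))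
      (q ^ (-(2 * (L : ℤ) + 2))) k j =
      Sf (q ^ 2) L k n j / (qp (q ^ 2) (q ^ 2) L * qp (q ^ 2) (q ^ 2) (n + j)) := by
  unfold qRacah Sf
  rw [Finset.sum_div]
  rw [← Finset.sum_subset (s₁ := Finset.range (min k j + 1)) (s₂ := Finset.range (k + 1))]
  · refine Finset.sum_congr rfl fun m hm => ?_
    have hm' : m ≤ j := by simp at hm; omega
    have d1 : 1 * (q ^ (-(2 * (L : ℤ) + 2))) * q ^ 2 = (q ^ 2) ^ (-(L : ℤ)) := by
      rw [← zpow_natCast q 2, ← _root_.zpow_mul, one_mul, ← zpow_add₀ hq]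
      congr 1; push_cast; ring
    have d2 : (q ^ (-(2 * (n : ℤ) + 2 * (j : ℤ) + 2))) * q ^ 2 = (q ^ 2) ^ (-((n + j : ℕ) : ℤ)) := by
      rw [← zpow_natCast q 2, ← _root_.zpow_mul, ← zpow_add₀ hq]
      congr 1; push_cast; ring
    have d3 : (q ^ (-(2 * (n : ℤ) + 2 * (j : ℤ) + 2))) * (q ^ (-(2 * (L : ℤ) + 2))) * (q ^ 2) ^ (j + 1)
        = (q ^ 2) ^ (-((n + L + 1 : ℕ) : ℤ)) := by
      rw [← pow_mul, ← zpow_natCast q 2, ← zpow_natCast q, ← _root_.zpow_mul, ← zpow_add₀ hq, ← zpow_add₀ hq]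
      congr 1; push_cast; ring
    rw [d1, d2, d3, one_mul, one_mul, one_mul, qp_neg hq j, qp_neg hq L, qp_neg hq (n + j),
      qp_neg hq (n + L + 1)]
    have f1 := uu_F (q ^ 2) (show m ≤ L by omega)
    have f2 := uu_F (q ^ 2) (show m ≤ n + j by omega)
    rw [← f1, ← f2]
    have n1 : uu (q ^ 2) m L ≠ 0 := fun h => F_ne hp L (by rw [← f1, h, zero_mul])
    have n2 : uu (q ^ 2) m ((n + j : ℕ) : ℤ) ≠ 0 := fun h => F_ne hp (n + j) (by rw [← f2, h, zero_mul])
    have n3 := F_ne hp m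
    have n4 := F_ne hp (L - m)
    have n5 := F_ne hp (n + j - m)
    have z1 := zpow_ne_zero ((m : ℤ) ^ 2 - m - 2 * (L : ℤ) * m) hq
    have z2 := zpow_ne_zero ((m : ℤ) ^ 2 - m - 2 * ((n + j : ℕ) : ℤ) * m) hq
    have key : q ^ ((m : ℤ) ^ 2 - m - 2 * (j : ℤ) * m) *
        q ^ ((m : ℤ) ^ 2 - m - 2 * ((n + L + 1 : ℕ) : ℤ) * m) * (q ^ 2) ^ m
        = q ^ ((m : ℤ) ^ 2 - m - 2 * (L : ℤ) * m) *
        q ^ ((m : ℤ) ^ 2 - m - 2 * ((n + j : ℕ) : ℤ) * m) := by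
      rw [← pow_mul, ← zpow_natCast q (2 * m), ← zpow_add₀ hq, ← zpow_add₀ hq, ← zpow_add₀ hq]
      congr 1; push_cast; ring
    have s1 : ((-1 : ℂ) ^ m) ≠ 0 := pow_ne_zero _ (by norm_num)
    generalize q ^ ((m : ℤ) ^ 2 - m - 2 * (j : ℤ) * m) = a1 at *
    generalize q ^ ((m : ℤ) ^ 2 - m - 2 * ((n + L + 1 : ℕ) : ℤ) * m) = a2 at *
    generalize q ^ ((m : ℤ) ^ 2 - m - 2 * (L : ℤ) * m) = a3 at *
    generalize q ^ ((m : ℤ) ^ 2 - m - 2 * ((n + j : ℕ) : ℤ) * m) = a4 at *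
    generalize (q ^ 2) ^ m = a5 at *
    generalize ((-1 : ℂ) ^ m) = s at *
    generalize qp (q ^ 2) (q ^ 2) m = Fm at *
    generalize qp ((q ^ 2) ^ (-(k : ℤ))) (q ^ 2) m = E1
    generalize qp ((q ^ 2) ^ (k + 1)) (q ^ 2) m = E2
    generalize uu (q ^ 2) m (L : ℤ) = u1 at *
    generalize uu (q ^ 2) m ((n + j : ℕ) : ℤ) = u2 at *
    generalize uu (q ^ 2) m ((n + L + 1 : ℕ) : ℤ) = u3 at *
    generalize uu (q ^ 2) m (j : ℤ) = u4 at *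
    field_simp
    linear_combination (E1 * E2 * u3 * u4) * key
  · intro m hm
    simp at hm ⊢
    omega
  · intro m hm hm2
    have : j < m := by simp at hm hm2; omega
    rw [uu_lt _ this]
    simp


lemma Sf_up_aux {p : ℂ} (hp0 : p ≠ 0) (hp : ∀ n : ℕ, p ^ (n + 1) ≠ 1) (L k n j M : ℕ) (hM : M ≤ L) :
    (1 - p ^ (n + j + k + 2)) * (1 - p ^ ((n : ℤ) + j - k + 1)) * (1 - p ^ ((L : ℤ) - j + n + 1)) *
      (∑ m ∈ Finset.range (M + 1), qp (p ^ (-(k : ℤ))) p m * qp (p ^ (k + 1)) p m *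
    (qp p p (L - m) / qp p p m ^ 2 * (uu p m j * uu p m ((n + L + 1 : ℕ) : ℤ) * qp p p (n + j - m))))
    = (1 - p ^ (n + 1)) * (1 - p ^ (L + n + 2)) *
      (∑ m ∈ Finset.range (M + 1), qp (p ^ (-(k : ℤ))) p m * qp (p ^ (k + 1)) p m *
    (qp p p (L - m) / qp p p m ^ 2 *
      (uu p m j * uu p m ((n + 1 + L + 1 : ℕ) : ℤ) * qp p p (n + 1 + j - m))))
    + p ^ (n + 1) * (1 - p ^ (j + 1)) * (1 - p ^ ((L : ℤ) - j)) *
      (∑ m ∈ Finset.range (M + 1), qp (p ^ (-(k : ℤ))) p m * qp (p ^ (k + 1)) p m *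
    (qp p p (L - m) / qp p p m ^ 2 *
      (uu p m ((j + 1 : ℕ) : ℤ) * uu p m ((n + L + 1 : ℕ) : ℤ) * qp p p (n + (j + 1) - m))))
    + (1 - p ^ ((L : ℤ) - j + n + 1)) * p ^ ((n : ℤ) + j + 1 - M) *
      (qp (p ^ (-(k : ℤ))) p (M + 1) * qp (p ^ (k + 1)) p (M + 1)) *
      (qp p p (L - M) / qp p p M ^ 2 *
        (uu p M j * uu p M ((n + L + 1 : ℕ) : ℤ) * qp p p (n + j - M))) := by
  induction M with
  | zero =>
    have a1 : n + 1 + j = n + j + 1 := by ring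
    have a2 : n + (j + 1) = n + j + 1 := by ring
    simp only [zero_add, Finset.sum_range_one, qp_zero', uu_zero, qp_succ', Nat.sub_zero, a1, a2,
      one_mul, pow_zero, mul_one, one_pow, div_one]
    simp only [zpow_add₀ hp0, zpow_sub₀ hp0, _root_.zpow_neg, zpow_natCast, zpow_one, pow_add, Nat.cast_zero,
      zpow_zero, pow_one]
    have h1 := pow_ne_zero k hp0
    have h2 := pow_ne_zero j hp0
    generalize p ^ k = x1 at *
    generalize p ^ j = x2 at *
    generalize p ^ n = x3 at *
    generalize p ^ L = x4 at *
    field_simp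
    ring
  | succ M ih =>
    rw [Finset.sum_range_succ, Finset.sum_range_succ _ (M + 1), Finset.sum_range_succ _ (M + 1),
      mul_add, mul_add, mul_add, ih (by omega)]
    rw [qp_succ' _ _ (M + 1), qp_succ' _ _ (M + 1)]
    by_cases hj : j < M
    · have b1 : uu p M (j : ℤ) = 0 := uu_lt p hj
      have b2 : uu p (M + 1) (j : ℤ) = 0 := uu_lt p (by omega)
      have b3 : uu p (M + 1) ((j + 1 : ℕ) : ℤ) = 0 := uu_lt p (by omega)
      rw [b1, b2, b3]
      ring
    · obtain ⟨c, rfl⟩ : ∃ c, j = M + c := ⟨j - M, by omega⟩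
      obtain ⟨d, rfl⟩ : ∃ d, L = M + 1 + d := ⟨L - (M + 1), by omega⟩
      have a1 : n + 1 + (M + c) - (M + 1) = n + c := by omega
      have a2 : n + (M + c + 1) - (M + 1) = n + c := by omega
      have a3 : n + (M + c) - M = n + c := by omega
      have a4 : M + 1 + d - M = d + 1 := by omega
      have a5 : M + 1 + d - (M + 1) = d := by omega
      have hh : (1 - p ^ (n + c)) * (qp p p (n + (M + c) - (M + 1)) * (1 - p ^ c))
          = qp p p (n + c) * (1 - p ^ c) := by
        rcases Nat.eq_zero_or_pos (n + c) with h0 | h0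
        · have : c = 0 := by omega
          subst this
          simp
        · have : n + (M + c) - (M + 1) = n + c - 1 := by omega
          obtain ⟨e, he⟩ : ∃ e, n + c = e + 1 := ⟨n + c - 1, by omega⟩
          rw [this, he, F_succ]
          simp only [Nat.add_sub_cancel]
          ring
      rw [a1, a2, a3, a4, a5]
      have c1 : uu p (M + 1) ((M + c : ℕ) : ℤ) = uu p M ((M + c : ℕ) : ℤ) * (1 - p ^ c) := by
        rw [uu_succ, show (((M + c : ℕ) : ℤ) - (M : ℤ)) = (c : ℤ) by push_cast; ring, zpow_natCast]
      have c2 : uu p (M + 1) ((M + c + 1 : ℕ) : ℤ) = (1 - p ^ (M + c + 1)) * uu p M ((M + c : ℕ) : ℤ) := by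
        rw [Nat.cast_succ, uu_succ', ← Nat.cast_succ, zpow_natCast]
      have c3 : uu p (M + 1) ((n + (M + 1 + d) + 1 : ℕ) : ℤ)
          = uu p M ((n + (M + 1 + d) + 1 : ℕ) : ℤ) * (1 - p ^ (n + d + 2)) := by
        rw [uu_succ, show (((n + (M + 1 + d) + 1 : ℕ) : ℤ) - (M : ℤ)) = ((n + d + 2 : ℕ) : ℤ) by
          push_cast; ring, zpow_natCast]
      have c4 : uu p (M + 1) ((n + 1 + (M + 1 + d) + 1 : ℕ) : ℤ)
          = (1 - p ^ (n + (M + 1 + d) + 1 + 1)) * uu p M ((n + (M + 1 + d) + 1 : ℕ) : ℤ) := by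
        rw [show n + 1 + (M + 1 + d) + 1 = (n + (M + 1 + d) + 1) + 1 by ring,
          Nat.cast_succ, uu_succ', ← Nat.cast_succ, zpow_natCast]
      rw [c1, c2, c3, c4, F_succ p M, F_succ p d]
      have n1 := F_ne hp M
      have n2 : (1 - p ^ (M + 1)) ≠ 0 := sub_ne_zero.mpr (hp M).symm
      generalize qp p p (n + (M + c) - (M + 1)) = X at *
      generalize qp p p (n + c) = Y at *
      generalize qp p p M = FM at *
      generalize qp p p d = Fd at *
      generalize uu p M ((M + c : ℕ) : ℤ) = U1 at *
      generalize uu p M ((n + (M + 1 + d) + 1 : ℕ) : ℤ) = U2 at *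
      generalize qp (p ^ (-(k : ℤ))) p (M + 1) = E1
      generalize qp (p ^ (k + 1)) p (M + 1) = E2
      generalize (∑ m ∈ Finset.range (M + 1), _ : ℂ) = S1
      generalize (∑ m ∈ Finset.range (M + 1), _ : ℂ) = S2
      push_cast
      simp only [zpow_add₀ hp0, zpow_sub₀ hp0, _root_.zpow_neg, zpow_natCast, zpow_one, pow_add, pow_one] at *
      have h1 := pow_ne_zero k hp0
      have h2 := pow_ne_zero c hp0
      have h3 := pow_ne_zero M hp0
      generalize p ^ k = x1 at *
      generalize p ^ c = x2 at *
      generalize p ^ n = x3 at *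
      generalize p ^ d = x4 at *
      generalize p ^ M = x5 at *
      have hn3 : 1 - p * x5 ≠ 0 := by rw [mul_comm]; exact n2
      rw [← sub_eq_zero]
      refine Eq.trans (b := (E1 * E2 * Fd / (FM * (1 - x5 * p)) ^ 2 * U1 * U2 * (1 - x3 * x4 * p ^ 2) *
        (1 - x3 * x4 * p ^ 2 / x2) * (1 - x3 * x5 ^ 2 * x2 * p ^ 3)) *
        ((1 - x3 * x2) * (X * (1 - x2)) - Y * (1 - x2))) ?_ (by rw [hh]; ring)
      field_simp
      ring

lemma Sf_up {p : ℂ} (hp0 : p ≠ 0) (hp : ∀ n : ℕ, p ^ (n + 1) ≠ 1) (L k n j : ℕ) (hk : k ≤ L) :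
    (1 - p ^ (n + j + k + 2)) * (1 - p ^ ((n : ℤ) + j - k + 1)) * (1 - p ^ ((L : ℤ) - j + n + 1)) *
      Sf p L k n j
    = (1 - p ^ (n + 1)) * (1 - p ^ (L + n + 2)) * Sf p L k (n + 1) j
    + p ^ (n + 1) * (1 - p ^ (j + 1)) * (1 - p ^ ((L : ℤ) - j)) * Sf p L k n (j + 1) := by
  have h := Sf_up_aux hp0 hp L k n j k hk
  have h0 : qp (p ^ (-(k : ℤ))) p (k + 1) = 0 := by
    rw [qp_succ', _root_.zpow_neg, zpow_natCast, inv_mul_cancel₀ (pow_ne_zero _ hp0)]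
    ring
  rw [h0] at h
  unfold Sf
  rw [h]
  ring

lemma Sf_down {p : ℂ} (hp0 : p ≠ 0) (L k n j : ℕ) (hk : k < n + j) :
    (1 - p ^ ((L : ℤ) - j + n + 1)) * Sf p L k n j
    = p ^ n * (1 - p ^ ((L : ℤ) - j + 1)) * (1 - p ^ j) * Sf p L k n (j - 1)
    + (1 - p ^ n) * (1 - p ^ (L + n + 1)) * Sf p L k (n - 1) j := by
  unfold Sf
  rw [Finset.mul_sum, Finset.mul_sum, Finset.mul_sum, ← Finset.sum_add_distrib]
  refine Finset.sum_congr rfl fun m hm => ?_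
  have hm' : m ≤ k := by simp at hm; omega
  suffices H : (1 - p ^ ((L : ℤ) - j + n + 1)) *
      (uu p m j * uu p m ((n + L + 1 : ℕ) : ℤ) * qp p p (n + j - m)) =
      p ^ n * (1 - p ^ ((L : ℤ) - j + 1)) * (1 - p ^ j) *
        (uu p m ((j - 1 : ℕ) : ℤ) * uu p m ((n + L + 1 : ℕ) : ℤ) * qp p p (n + (j - 1) - m))
      + (1 - p ^ n) * (1 - p ^ (L + n + 1)) *
        (uu p m j * uu p m ((n - 1 + L + 1 : ℕ) : ℤ) * qp p p (n - 1 + j - m)) by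
    linear_combination (qp (p ^ (-(k : ℤ))) p m * qp (p ^ (k + 1)) p m *
      (qp p p (L - m) / qp p p m ^ 2)) * H
  by_cases hj : j < m
  · rw [uu_lt p hj, uu_lt p (show j - 1 < m by omega)]
    ring
  rcases n with _ | n
  · obtain ⟨c, rfl⟩ : ∃ c, j = c + 1 := ⟨j - 1, by omega⟩
    have f1 := uu_F p (show m ≤ c + 1 by omega)
    have f2 := uu_F p (show m ≤ c by omega)
    simp only [zero_add, Nat.add_sub_cancel, pow_zero, sub_self, zero_mul, add_zero, one_mul]
    rw [F_succ, ← f2] at f1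
    simp only [Nat.cast_zero, add_zero]
    linear_combination ((1 - p ^ ((L : ℤ) - ((c + 1 : ℕ) : ℤ) + 1)) *
      uu p m ((L + 1 : ℕ) : ℤ)) * f1
  · obtain ⟨d, rfl⟩ : ∃ d, j = m + d := ⟨j - m, by omega⟩
    have g1 : uu p m ((n + L + 1 : ℕ) : ℤ) * (1 - p ^ (L + (n + 1) + 1)) =
        uu p m ((n + 1 + L + 1 : ℕ) : ℤ) * (1 - p ^ ((n : ℤ) + L + 2 - m)) := by
      have e1 := uu_succ p m ((n + 1 + L + 1 : ℕ) : ℤ)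
      have e2 := uu_succ' p m ((n + L + 1 : ℕ) : ℤ)
      rw [show (((n + 1 + L + 1 : ℕ) : ℤ)) = ((n + L + 1 : ℕ) : ℤ) + 1 by push_cast; ring] at *
      rw [e1] at e2
      have t1 : ((n + L + 1 : ℕ) : ℤ) + 1 - (m : ℤ) = (n : ℤ) + L + 2 - m := by push_cast; ring
      have t2 : ((n + L + 1 : ℕ) : ℤ) + 1 = ((L + (n + 1) + 1 : ℕ) : ℤ) := by push_cast; ring
      rw [t1] at e2
      have t3 : p ^ (((n + L + 1 : ℕ) : ℤ) + 1) = p ^ (L + (n + 1) + 1) := by rw [t2, zpow_natCast]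
      rw [t3] at e2
      linear_combination -e2
    have g2 : uu p m ((m + d - 1 : ℕ) : ℤ) * (1 - p ^ (m + d)) = uu p m ((m + d : ℕ) : ℤ) * (1 - p ^ d) := by
      rcases Nat.eq_zero_or_pos (m + d) with h0 | h0
      · have : d = 0 := by omega
        have : m = 0 := by omega
        subst d m
        simp
      · obtain ⟨e, he⟩ : ∃ e, m + d = e + 1 := ⟨m + d - 1, by omega⟩
        have e1 := uu_succ p m ((m + d : ℕ) : ℤ)
        have t1 : ((m + d : ℕ) : ℤ) - (m : ℤ) = (d : ℤ) := by push_cast; ring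
        rw [t1, zpow_natCast] at e1
        rw [← e1, he, Nat.add_sub_cancel, Nat.cast_succ, uu_succ', ← Nat.cast_succ, zpow_natCast, Nat.succ_eq_add_one]
        ring
    have s1 : n + 1 + (m + d) - m = n + d + 1 := by omega
    have s2 : n + 1 - 1 + (m + d) - m = n + d := by omega
    have s4 : n + 1 - 1 + L + 1 = n + L + 1 := by omega
    have g3 : (1 - p ^ (m + d)) * (uu p m ((m + d - 1 : ℕ) : ℤ) * uu p m ((n + 1 + L + 1 : ℕ) : ℤ) *
        qp p p (n + 1 + (m + d - 1) - m)) = uu p m ((m + d : ℕ) : ℤ) * (1 - p ^ d) *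
          (uu p m ((n + 1 + L + 1 : ℕ) : ℤ) * qp p p (n + d)) := by
      rcases Nat.eq_zero_or_pos (m + d) with h0 | h0
      · have : d = 0 := by omega
        have : m = 0 := by omega
        subst d m
        simp
      · rw [show n + 1 + (m + d - 1) - m = n + d by omega, ← g2]
        ring
    rw [s1, s2, s4, F_succ]
    have g4 : p ^ ((L : ℤ) - ((m + d : ℕ) : ℤ) + ((n + 1 : ℕ) : ℤ) + 1) * p ^ (m + d) = p ^ (L + n + 2) := by
      rw [← zpow_natCast, ← zpow_natCast, ← zpow_add₀ hp0]
      congr 1; push_cast; ring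
    have key : (1 - p ^ ((L : ℤ) - ((m + d : ℕ) : ℤ) + ((n + 1 : ℕ) : ℤ) + 1)) * (1 - p ^ (n + d + 1))
        = p ^ (n + 1) * (1 - p ^ ((L : ℤ) - ((m + d : ℕ) : ℤ) + 1)) * (1 - p ^ d) +
          (1 - p ^ (n + 1)) * (1 - p ^ ((n : ℤ) + L + 2 - m)) := by
      push_cast
      have h2 := pow_ne_zero d hp0
      have h3 := pow_ne_zero m hp0
      have z2 : p ^ (2 : ℤ) = p ^ 2 := by norm_cast
      simp only [zpow_add₀ hp0, zpow_sub₀ hp0, _root_.zpow_neg, zpow_natCast, zpow_one, pow_add, pow_one, z2]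
      field_simp
      ring
    linear_combination (uu p m ((m + d : ℕ) : ℤ) * uu p m ((n + 1 + L + 1 : ℕ) : ℤ) * qp p p (n + d)) * key
      - p ^ (n + 1) * (1 - p ^ ((L : ℤ) - ((m + d : ℕ) : ℤ) + 1)) * g3
      - (1 - p ^ (n + 1)) * uu p m ((m + d : ℕ) : ℤ) * qp p p (n + d) * g1


lemma c_rec {p : ℂ} (hp : ∀ n : ℕ, p ^ (n + 1) ≠ 1) (β : ℂ) (r : ℕ) :
    qp β p (r + 1) / qp p p (r + 1) * (1 - p ^ (r + 1)) = qp β p r / qp p p r * (1 - β * p ^ r) := by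
  have h1 := F_ne hp r
  have h2 : (1 - p ^ (r + 1)) ≠ 0 := sub_ne_zero.mpr (hp r).symm
  rw [F_succ, qp_succ']
  field_simp

lemma Chat_form (p β : ℂ) (k : ℕ) (z : ℂ) : Chat p β k z = ∑ r ∈ Finset.range (k + 1),
    (qp β p r / qp p p r) * (qp β p (k - r) / qp p p (k - r)) * z ^ ((k : ℤ) - 2 * (r : ℤ)) := by
  unfold Chat
  refine Finset.sum_congr rfl fun r _ => ?_
  rw [div_mul_div_comm]

lemma Chat_rec0 {p : ℂ} (hp : ∀ n : ℕ, p ^ (n + 1) ≠ 1) (β z : ℂ) :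
    (1 - p) * Chat p β 1 z = (z + z⁻¹) * (1 - β) * Chat p β 0 z := by
  have h2 : (1 - p) ≠ 0 := by have := hp 0; simp at this; exact sub_ne_zero.mpr (Ne.symm this)
  simp [Chat, Finset.sum_range_succ, qp]
  field_simp

lemma Chat_rec {p : ℂ} (hp : ∀ n : ℕ, p ^ (n + 1) ≠ 1) (β z : ℂ) (hz : z ≠ 0) (n : ℕ) :
    (1 - p ^ (n + 2)) * Chat p β (n + 2) z =
      (z + z⁻¹) * (1 - β * p ^ (n + 1)) * Chat p β (n + 1) z - (1 - β ^ 2 * p ^ n) * Chat p β n z := by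
  set c : ℕ → ℂ := fun r => qp β p r / qp p p r with hc
  have hrec : ∀ r, c (r + 1) * (1 - p ^ (r + 1)) = c r * (1 - β * p ^ r) := fun r => c_rec hp β r
  have e2 : Chat p β (n + 2) z = c 0 * c (n + 2) * z ^ ((n : ℤ) + 2) +
      (∑ r ∈ Finset.range (n + 1), c (r + 1) * c (n - r + 1) * z ^ ((n : ℤ) - 2 * r)) +
      c (n + 2) * c 0 * z ^ (-(n : ℤ) - 2) := by
    rw [Chat_form, Finset.sum_range_succ, Finset.sum_range_succ']
    have t : ∑ r ∈ Finset.range (n + 1), qp β p (r + 1) / qp p p (r + 1) *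
        (qp β p (n + 2 - (r + 1)) / qp p p (n + 2 - (r + 1))) *
        z ^ (((n + 2 : ℕ) : ℤ) - 2 * ((r + 1 : ℕ) : ℤ)) =
        ∑ r ∈ Finset.range (n + 1), c (r + 1) * c (n - r + 1) * z ^ ((n : ℤ) - 2 * r) := by
      refine Finset.sum_congr rfl fun r hr => ?_
      have : n + 2 - (r + 1) = n - r + 1 := by simp at hr; omega
      rw [this]
      congr 2
      push_cast; ring
    rw [t]
    have u1 : (((n + 2 : ℕ) : ℤ) - 2 * ((0 : ℕ) : ℤ)) = (n : ℤ) + 2 := by push_cast; ring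
    have u2 : (((n + 2 : ℕ) : ℤ) - 2 * ((n + 2 : ℕ) : ℤ)) = -(n : ℤ) - 2 := by push_cast; ring
    rw [u1, u2, Nat.sub_self, Nat.sub_zero]
    ring
  have e1a : z * Chat p β (n + 1) z = c 0 * c (n + 1) * z ^ ((n : ℤ) + 2) +
      (∑ r ∈ Finset.range (n + 1), c (r + 1) * c (n - r) * z ^ ((n : ℤ) - 2 * r)) := by
    rw [Chat_form, Finset.mul_sum, Finset.sum_range_succ', add_comm]
    congr 1
    · have u1 : (n : ℤ) + 2 = (((n + 1 : ℕ) : ℤ) - 2 * ((0 : ℕ) : ℤ)) + 1 := by push_cast; ring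
      rw [u1, zpow_add_one₀ hz, Nat.sub_zero]
      ring
    · refine Finset.sum_congr rfl fun r hr => ?_
      have : n + 1 - (r + 1) = n - r := by omega
      have u1 : (n : ℤ) - 2 * r = (((n + 1 : ℕ) : ℤ) - 2 * ((r + 1 : ℕ) : ℤ)) + 1 := by push_cast; ring
      rw [this, u1, zpow_add_one₀ hz]
      ring
  have e1b : z⁻¹ * Chat p β (n + 1) z =
      (∑ r ∈ Finset.range (n + 1), c r * c (n - r + 1) * z ^ ((n : ℤ) - 2 * r)) +
      c (n + 1) * c 0 * z ^ (-(n : ℤ) - 2) := by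
    rw [Chat_form, Finset.mul_sum, Finset.sum_range_succ]
    congr 1
    · refine Finset.sum_congr rfl fun r hr => ?_
      have : n + 1 - r = n - r + 1 := by simp at hr; omega
      have u1 : (n : ℤ) - 2 * r = (((n + 1 : ℕ) : ℤ) - 2 * ((r : ℕ) : ℤ)) - 1 := by push_cast; ring
      rw [this, u1, zpow_sub_one₀ hz]
      ring
    · have u1 : -(n : ℤ) - 2 = (((n + 1 : ℕ) : ℤ) - 2 * ((n + 1 : ℕ) : ℤ)) - 1 := by push_cast; ring
      rw [u1, zpow_sub_one₀ hz, Nat.sub_self]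
      ring
  have e0 : Chat p β n z = ∑ r ∈ Finset.range (n + 1), c r * c (n - r) * z ^ ((n : ℤ) - 2 * r) := by
    rw [Chat_form]
  have mid : ∀ r ∈ Finset.range (n + 1), (1 - p ^ (n + 2)) * (c (r + 1) * c (n - r + 1)) =
      (1 - β * p ^ (n + 1)) * (c (r + 1) * c (n - r) + c r * c (n - r + 1)) -
        (1 - β ^ 2 * p ^ n) * (c r * c (n - r)) := by
    intro r hr
    obtain ⟨s, hs⟩ : ∃ s, n = r + s := ⟨n - r, by simp at hr; omega⟩
    have hs' : n - r = s := by omega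
    rw [hs', hs]
    have h1 := hrec r
    have h2 := hrec s
    have d1 : (1 - p ^ (r + 1)) ≠ 0 := sub_ne_zero.mpr (hp r).symm
    have d2 : (1 - p ^ (s + 1)) ≠ 0 := sub_ne_zero.mpr (hp s).symm
    rw [← eq_div_iff d1] at h1
    rw [← eq_div_iff d2] at h2
    rw [h1, h2]
    field_simp
    ring
  have b0 := hrec (n + 1)
  have hsum : (1 - p ^ (n + 2)) *
      (∑ r ∈ Finset.range (n + 1), c (r + 1) * c (n - r + 1) * z ^ ((n : ℤ) - 2 * r)) =
      (1 - β * p ^ (n + 1)) *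
        ((∑ r ∈ Finset.range (n + 1), c (r + 1) * c (n - r) * z ^ ((n : ℤ) - 2 * r)) +
        (∑ r ∈ Finset.range (n + 1), c r * c (n - r + 1) * z ^ ((n : ℤ) - 2 * r))) -
      (1 - β ^ 2 * p ^ n) * (∑ r ∈ Finset.range (n + 1), c r * c (n - r) * z ^ ((n : ℤ) - 2 * r)) := by
    rw [← Finset.sum_add_distrib, Finset.mul_sum, Finset.mul_sum, Finset.mul_sum,
      ← Finset.sum_sub_distrib]
    refine Finset.sum_congr rfl fun r hr => ?_
    linear_combination (z ^ ((n : ℤ) - 2 * r)) * mid r hr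
  have e1 : (z + z⁻¹) * (1 - β * p ^ (n + 1)) * Chat p β (n + 1) z =
      (1 - β * p ^ (n + 1)) * (z * Chat p β (n + 1) z + z⁻¹ * Chat p β (n + 1) z) := by ring
  rw [e1, e1a, e1b, e0, e2]
  linear_combination hsum + (c 0 * z ^ ((n : ℤ) + 2) + c 0 * z ^ (-(n : ℤ) - 2)) * b0

lemma exists_z (x : ℂ) : ∃ z : ℂ, z ≠ 0 ∧ x = (z + z⁻¹) / 2 := by
  obtain ⟨s, hs⟩ := IsAlgClosed.exists_pow_nat_eq (x ^ 2 - 1) (n := 2) (by norm_num)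
  have h1 : (x + s) * (x - s) = 1 := by linear_combination -hs
  have h2 : x + s ≠ 0 := left_ne_zero_of_mul_eq_one h1
  refine ⟨x + s, h2, ?_⟩
  rw [inv_eq_of_mul_eq_one_right h1]
  ring

lemma sum_ab {p a b : ℂ} (hp : ∀ n : ℕ, p ^ (n + 1) ≠ 1) (hab : a * b = 1) (M : ℕ) :
    ∑ m ∈ Finset.range (M + 1), qp a p m * qp b p m * p ^ m / qp p p m ^ 2 =
      qp (a * p) p M * qp (b * p) p M / qp p p M ^ 2 := by
  have hs : ∀ (a : ℂ) (M : ℕ), qp a p (M + 1) = (1 - a) * qp (a * p) p M := by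
    intro a M
    induction M with
    | zero => simp [qp]
    | succ M ih => rw [qp_succ', ih, qp_succ']; ring
  induction M with
  | zero => simp [qp]
  | succ M ih =>
    rw [Finset.sum_range_succ, ih, hs a, hs b, F_succ, qp_succ' (a * p), qp_succ' (b * p)]
    have h1 := F_ne hp M
    have h2 : (1 - p ^ (M + 1)) ≠ 0 := sub_ne_zero.mpr (hp M).symm
    rw [pow_succ p M] at h2 ⊢
    generalize qp (a * p) p M = X
    generalize qp (b * p) p M = Y
    generalize qp p p M = Z at *
    generalize p ^ M = W at *
    have h3 : 1 - p * W ≠ 0 := by rw [mul_comm]; exact h2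
    field_simp
    linear_combination (X * Y * (W * p - W ^ 2 * p ^ 2)) * hab

lemma saal {p y : ℂ} (hp0 : p ≠ 0) (hp : ∀ n : ℕ, p ^ (n + 1) ≠ 1) (k : ℕ)
    (hy : ∀ m : ℕ, m ≤ k → 1 - y * p ^ (-(m : ℤ)) ≠ 0) :
    (∏ r ∈ Finset.range k, (y - p ^ (r + 1))) *
      ∑ m ∈ Finset.range (k + 1), qp (p ^ (-(k : ℤ))) p m * qp (p ^ (k + 1)) p m / qp p p m ^ 2 *
        ((1 - y) / (1 - y * p ^ (-(m : ℤ)))) = qp (y * p) p k := by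
  have hs : ∀ (a : ℂ) (M : ℕ), qp a p M * (1 - a * p ^ M) = (1 - a) * qp (a * p) p M := by
    intro a M
    induction M with
    | zero => simp [qp]
    | succ M ih => rw [qp_succ', ih, qp_succ']; ring
  induction k with
  | zero =>
    have := hy 0 le_rfl
    simp at this
    simp [qp]
    exact this
  | succ k ih =>
    have ih := ih (fun m hm => hy m (by omega))
    rw [Finset.prod_range_succ, qp_succ', ← ih]
    have h0 : qp (p ^ (-(k : ℤ))) p (k + 1) = 0 := by
      rw [qp_succ', _root_.zpow_neg, zpow_natCast, inv_mul_cancel₀ (pow_ne_zero _ hp0)]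
      ring
    have hext : ∑ m ∈ Finset.range (k + 1), qp (p ^ (-(k : ℤ))) p m * qp (p ^ (k + 1)) p m / qp p p m ^ 2 *
        ((1 - y) / (1 - y * p ^ (-(m : ℤ)))) =
        ∑ m ∈ Finset.range (k + 1 + 1), qp (p ^ (-(k : ℤ))) p m * qp (p ^ (k + 1)) p m / qp p p m ^ 2 *
        ((1 - y) / (1 - y * p ^ (-(m : ℤ)))) := by
      rw [Finset.sum_range_succ _ (k + 1), h0]
      simp
    rw [hext]
    have hz : ∑ m ∈ Finset.range (k + 1 + 1),
        qp (p ^ (-((k + 1 : ℕ) : ℤ))) p m * qp (p ^ (k + 1)) p m * p ^ m / qp p p m ^ 2 = 0 := by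
      rw [sum_ab hp]
      · have : p ^ (-((k + 1 : ℕ) : ℤ)) * p = p ^ (-(k : ℤ)) := by
          rw [← zpow_add_one₀ hp0]; congr 1; push_cast; ring
        rw [this, h0]
        simp
      · rw [← zpow_natCast, ← zpow_add₀ hp0]
        simp
    have hterm : (y - p ^ (k + 1)) * (∑ m ∈ Finset.range (k + 1 + 1),
        qp (p ^ (-((k + 1 : ℕ) : ℤ))) p m * qp (p ^ (k + 1 + 1)) p m / qp p p m ^ 2 *
        ((1 - y) / (1 - y * p ^ (-(m : ℤ))))) -
        (1 - y * p * p ^ k) * (∑ m ∈ Finset.range (k + 1 + 1),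
          qp (p ^ (-(k : ℤ))) p m * qp (p ^ (k + 1)) p m / qp p p m ^ 2 *
        ((1 - y) / (1 - y * p ^ (-(m : ℤ))))) =
        -(1 + p ^ (k + 1)) * (1 - y) * ∑ m ∈ Finset.range (k + 1 + 1),
        qp (p ^ (-((k + 1 : ℕ) : ℤ))) p m * qp (p ^ (k + 1)) p m * p ^ m / qp p p m ^ 2 := by
      rw [Finset.mul_sum, Finset.mul_sum, Finset.mul_sum, ← Finset.sum_sub_distrib]
      refine Finset.sum_congr rfl fun m hm => ?_
      have hy' := hy m (by simp at hm; omega)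
      have s1 := hs (p ^ (-((k + 1 : ℕ) : ℤ))) m
      have s2 := hs (p ^ (k + 1)) m
      have : p ^ (-((k + 1 : ℕ) : ℤ)) * p = p ^ (-(k : ℤ)) := by
        rw [← zpow_add_one₀ hp0]; congr 1; push_cast; ring
      rw [this] at s1
      rw [← pow_succ] at s2
      have hF := F_ne hp m
      generalize qp (p ^ (-((k + 1 : ℕ) : ℤ))) p m = A at *
      generalize qp (p ^ (k + 1)) p m = B at *
      generalize qp (p ^ (-(k : ℤ))) p m = A' at *
      generalize qp (p ^ (k + 1 + 1)) p m = B' at *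
      generalize qp p p m = G at *
      rw [_root_.zpow_neg, zpow_natCast] at *
      have hb : p ^ (k + 1) ≠ 1 := hp k
      have hb0 : p ^ (k + 1) ≠ 0 := pow_ne_zero _ hp0
      have hm0 : p ^ m ≠ 0 := pow_ne_zero _ hp0
      rw [show y * p * p ^ k = y * p ^ (k + 1) by ring]
      generalize p ^ (k + 1) = b at *
      generalize p ^ m = W at *
      have hb1 : 1 - b ≠ 0 := sub_ne_zero.mpr hb.symm
      have hb2 : 1 - b⁻¹ ≠ 0 := by
        intro h
        apply hb1
        field_simp at h
        linear_combination -h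
      have hA' : A' = A * (1 - b⁻¹ * W) / (1 - b⁻¹) := by
        rw [eq_div_iff hb2]; linear_combination -s1
      have hB' : B' = B * (1 - b * W) / (1 - b) := by
        rw [eq_div_iff hb1]; linear_combination -s2
      rw [hA', hB']
      have hb3 : b - 1 ≠ 0 := by intro h; apply hb1; linear_combination -h
      have e : (1 - b⁻¹) = (b - 1) / b := by field_simp
      have e2 : (1 - y * W⁻¹) = (W - y) / W := by field_simp
      rw [e2] at hy' ⊢
      have hy2 : W - y ≠ 0 := by
        intro h; apply hy'; rw [h]; simp
      rw [e]
      field_simp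
      ring
    rw [hz, mul_zero] at hterm
    linear_combination (∏ r ∈ Finset.range k, (y - p ^ (r + 1))) * hterm


def Uf (q : ℂ) (z : ℂ) (i k : ℕ) : ℂ :=
  q ^ ((2 * (k : ℤ) + 1) * ((k : ℤ) - (i : ℤ))) *
    (qp (q ^ 2) (q ^ 2) k * qp (q ^ 2) (q ^ 2) (k + i) /
      (qp (q ^ 2) (q ^ 2) (2 * k) * qp (q ^ 2) (q ^ 2) i)) *
    Chat (q ^ 2) (q ^ (-(2 * (k : ℤ)))) (k - i) z

def Kf (q : ℂ) (L k : ℕ) : ℂ :=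
  q ^ (2 * (k : ℤ) * ((L : ℤ) + 1) - k) * (qp ((q ^ 2) ^ (-(L : ℤ))) (q ^ 2) k /
    (qp (q ^ 2) (q ^ 2) k * qp ((q ^ 2) ^ (L + 1 + 1)) (q ^ 2) k)) *
    (qp (q ^ 2) (q ^ 2) (2 * k + 1) / qp (q ^ 2) (q ^ 2) L)

def Qf (q : ℂ) (L : ℕ) (z : ℂ) (n j k : ℕ) : ℂ :=
  if k ≤ n + j then
    Kf q L k * q ^ (n + j) / qp (q ^ 2) (q ^ 2) (n + j + k + 1) * Sf (q ^ 2) L k n j *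
      Chat (q ^ 2) ((q ^ 2) ^ (k + 1)) (n + j - k) z
  else 0

lemma Qf_rec {q : ℂ} (hq : q ≠ 0) (hp : ∀ n : ℕ, (q ^ 2) ^ (n + 1) ≠ 1) (L : ℕ) (z : ℂ) (hz : z ≠ 0)
    (n j k : ℕ) (hj : j ≤ L) (hk : k ≤ L) :
    (z + z⁻¹) / 2 * Qf q L z n j k =
      Qf q L z (n + 1) j k * (1 / (2 * q) * ((1 - (q ^ 2) ^ (n + 1)) * (1 - (q ^ 2) ^ (L + n + 2))) /
        ((1 - (q ^ 2) ^ (n + j + 1)) * (1 - (q ^ 2) ^ ((L : ℤ) - j + n + 1)))) +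
      (Qf q L z n (j - 1) k * (q * (q ^ 2) ^ n / 2 * ((1 - (q ^ 2) ^ ((L : ℤ) - j + 1)) * (1 - (q ^ 2) ^ j)) /
        ((1 - (q ^ 2) ^ (n + j + 1)) * (1 - (q ^ 2) ^ ((L : ℤ) - j + n + 1)))) +
      Qf q L z n (j + 1) k * (q * (q ^ 2) ^ n / 2 * ((1 - (q ^ 2) ^ (j + 1)) * (1 - (q ^ 2) ^ ((L : ℤ) - j))) /
        ((1 - (q ^ 2) ^ (n + j + 1)) * (1 - (q ^ 2) ^ ((L : ℤ) - j + n + 1))))) +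
      Qf q L z (n - 1) j k * (q / 2 * ((1 - (q ^ 2) ^ n) * (1 - (q ^ 2) ^ (L + n + 1))) /
        ((1 - (q ^ 2) ^ (n + j + 1)) * (1 - (q ^ 2) ^ ((L : ℤ) - j + n + 1)))) := by
  have hp0 : q ^ 2 ≠ 0 := pow_ne_zero _ hq
  have hup := Sf_up hp0 hp L k n j hk
  have hD1 : 1 - (q ^ 2) ^ (n + j + 1) ≠ 0 := sub_ne_zero.mpr (hp _).symm
  have hDj : 1 - (q ^ 2) ^ ((L : ℤ) - j + n + 1) ≠ 0 := by
    obtain ⟨d, rfl⟩ : ∃ d, L = j + d := ⟨L - j, by omega⟩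
    rw [show (((j + d : ℕ) : ℤ) - j + n + 1) = ((d + n + 1 : ℕ) : ℤ) by push_cast; ring, zpow_natCast]
    exact sub_ne_zero.mpr (hp _).symm
  by_cases h1 : n + j + 1 < k
  · have e1 : Qf q L z n j k = 0 := if_neg (by omega)
    have e2 : Qf q L z (n + 1) j k = 0 := if_neg (by omega)
    have e3 : Qf q L z n (j - 1) k = 0 := if_neg (by omega)
    have e4 : Qf q L z n (j + 1) k = 0 := if_neg (by omega)
    have e5 : Qf q L z (n - 1) j k = 0 := if_neg (by omega)
    rw [e1, e2, e3, e4, e5]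
    ring
  have e2 : Qf q L z (n + 1) j k = Kf q L k * q ^ (n + j + 1) / qp (q ^ 2) (q ^ 2) (n + j + k + 2) *
      Sf (q ^ 2) L k (n + 1) j * Chat (q ^ 2) ((q ^ 2) ^ (k + 1)) (n + j + 1 - k) z := by
    unfold Qf
    rw [if_pos (by omega), show n + 1 + j = n + j + 1 by ring,
      show n + j + 1 + k + 1 = n + j + k + 2 by ring]
  have e4 : Qf q L z n (j + 1) k = Kf q L k * q ^ (n + j + 1) / qp (q ^ 2) (q ^ 2) (n + j + k + 2) *
      Sf (q ^ 2) L k n (j + 1) * Chat (q ^ 2) ((q ^ 2) ^ (k + 1)) (n + j + 1 - k) z := by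
    unfold Qf
    rw [if_pos (by omega), show n + (j + 1) = n + j + 1 by ring,
      show n + j + 1 + k + 1 = n + j + k + 2 by ring]
  have hF2 := F_ne hp (n + j + k + 2)
  rw [e2, e4]
  by_cases h2 : k = n + j + 1
  · have e1 : Qf q L z n j k = 0 := if_neg (by omega)
    have e3 : Qf q L z n (j - 1) k = 0 := if_neg (by omega)
    have e5 : Qf q L z (n - 1) j k = 0 := if_neg (by omega)
    rw [e1, e3, e5]
    have h0 : (q ^ 2) ^ ((n : ℤ) + j - k + 1) = 1 := by
      rw [h2, show (n : ℤ) + j - ((n + j + 1 : ℕ) : ℤ) + 1 = 0 by push_cast; ring, zpow_zero]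
    rw [h0] at hup
    rw [pow_succ (q ^ 2) n] at *
    symm
    refine Eq.trans (b := - (Kf q L k * q ^ (n + j + 1) / qp (q ^ 2) (q ^ 2) (n + j + k + 2) *
      Chat (q ^ 2) ((q ^ 2) ^ (k + 1)) (n + j + 1 - k) z / (2 * q) /
      ((1 - (q ^ 2) ^ (n + j + 1)) * (1 - (q ^ 2) ^ ((L : ℤ) - j + n + 1)))) *
      ((1 - (q ^ 2) ^ (n + j + k + 2)) * (1 - 1) * (1 - (q ^ 2) ^ ((L : ℤ) - j + n + 1)) *
        Sf (q ^ 2) L k n j - ((1 - (q ^ 2) ^ n * q ^ 2) * (1 - (q ^ 2) ^ (L + n + 2)) * Sf (q ^ 2) L k (n + 1) j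
    + (q ^ 2) ^ n * q ^ 2 * (1 - (q ^ 2) ^ (j + 1)) * (1 - (q ^ 2) ^ ((L : ℤ) - j)) * Sf (q ^ 2) L k n (j + 1))))
      ?_ (by rw [hup]; ring)
    generalize (1 - (q ^ 2) ^ (n + j + 1)) = D1 at *
    generalize (1 - (q ^ 2) ^ ((L : ℤ) - j + n + 1)) = Dj at *
    generalize (1 - (q ^ 2) ^ ((L : ℤ) - j)) = y1
    generalize (1 - (q ^ 2) ^ (j + 1)) = y2
    generalize (1 - (q ^ 2) ^ (L + n + 2)) = y3
    generalize (q ^ 2) ^ n = y4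
    generalize Sf (q ^ 2) L k (n + 1) j = S1
    generalize Sf (q ^ 2) L k n (j + 1) = S2
    generalize Kf q L k * q ^ (n + j + 1) / qp (q ^ 2) (q ^ 2) (n + j + k + 2) = KK
    field_simp
    ring
  obtain ⟨s, hs⟩ : ∃ s, n + j = k + s := ⟨n + j - k, by omega⟩
  have e1 : Qf q L z n j k = Kf q L k * q ^ (n + j) / qp (q ^ 2) (q ^ 2) (n + j + k + 1) *
      Sf (q ^ 2) L k n j * Chat (q ^ 2) ((q ^ 2) ^ (k + 1)) s z := by
    unfold Qf
    rw [if_pos (by omega), show n + j - k = s by omega]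
  have hup' : (1 - (q ^ 2) ^ (n + j + k + 2)) * (1 - (q ^ 2) ^ (s + 1)) *
      (1 - (q ^ 2) ^ ((L : ℤ) - j + n + 1)) * Sf (q ^ 2) L k n j
      = (1 - (q ^ 2) ^ (n + 1)) * (1 - (q ^ 2) ^ (L + n + 2)) * Sf (q ^ 2) L k (n + 1) j
      + (q ^ 2) ^ (n + 1) * (1 - (q ^ 2) ^ (j + 1)) * (1 - (q ^ 2) ^ ((L : ℤ) - j)) *
        Sf (q ^ 2) L k n (j + 1) := by
    rw [← hup, ← zpow_natCast (q ^ 2) (s + 1)]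
    congr 5
    push_cast
    omega
  have hF1 := F_ne hp (n + j + k + 1)
  have hFs : qp (q ^ 2) (q ^ 2) (n + j + k + 2) =
    qp (q ^ 2) (q ^ 2) (n + j + k + 1) * (1 - (q ^ 2) ^ (n + j + k + 2)) := F_succ _ _
  have hup2 : Sf (q ^ 2) L k n j * (1 - (q ^ 2) ^ (s + 1)) / qp (q ^ 2) (q ^ 2) (n + j + k + 1) =
      ((1 - (q ^ 2) ^ (n + 1)) * (1 - (q ^ 2) ^ (L + n + 2)) * Sf (q ^ 2) L k (n + 1) j
      + (q ^ 2) ^ (n + 1) * (1 - (q ^ 2) ^ (j + 1)) * (1 - (q ^ 2) ^ ((L : ℤ) - j)) *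
        Sf (q ^ 2) L k n (j + 1)) /
        ((1 - (q ^ 2) ^ ((L : ℤ) - j + n + 1)) * qp (q ^ 2) (q ^ 2) (n + j + k + 2)) := by
    rw [← hup', hFs]
    have : 1 - (q ^ 2) ^ (n + j + k + 2) ≠ 0 := sub_ne_zero.mpr (hp (n + j + k + 1)).symm
    generalize (1 - (q ^ 2) ^ (n + j + k + 2)) = D2 at *
    generalize (1 - (q ^ 2) ^ ((L : ℤ) - j + n + 1)) = Dj at *
    field_simp
  -- the part with the upper polynomial
  have hUP : Kf q L k * q ^ (n + j + 1) / qp (q ^ 2) (q ^ 2) (n + j + k + 2) *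
      Sf (q ^ 2) L k (n + 1) j * Chat (q ^ 2) ((q ^ 2) ^ (k + 1)) (n + j + 1 - k) z *
      (1 / (2 * q) * ((1 - (q ^ 2) ^ (n + 1)) * (1 - (q ^ 2) ^ (L + n + 2))) /
        ((1 - (q ^ 2) ^ (n + j + 1)) * (1 - (q ^ 2) ^ ((L : ℤ) - j + n + 1)))) +
      Kf q L k * q ^ (n + j + 1) / qp (q ^ 2) (q ^ 2) (n + j + k + 2) *
      Sf (q ^ 2) L k n (j + 1) * Chat (q ^ 2) ((q ^ 2) ^ (k + 1)) (n + j + 1 - k) z *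
      (q * (q ^ 2) ^ n / 2 * ((1 - (q ^ 2) ^ (j + 1)) * (1 - (q ^ 2) ^ ((L : ℤ) - j))) /
        ((1 - (q ^ 2) ^ (n + j + 1)) * (1 - (q ^ 2) ^ ((L : ℤ) - j + n + 1)))) =
      Kf q L k * q ^ (n + j) / (2 * (1 - (q ^ 2) ^ (n + j + 1))) *
        (Sf (q ^ 2) L k n j * (1 - (q ^ 2) ^ (s + 1)) / qp (q ^ 2) (q ^ 2) (n + j + k + 1)) *
        Chat (q ^ 2) ((q ^ 2) ^ (k + 1)) (s + 1) z := by
    rw [hup2, show n + j + 1 - k = s + 1 by omega, pow_succ q (n + j), pow_succ (q ^ 2) n]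
    generalize (1 - (q ^ 2) ^ (n + j + 1)) = D1 at *
    generalize (1 - (q ^ 2) ^ ((L : ℤ) - j + n + 1)) = Dj at *
    generalize (1 - (q ^ 2) ^ ((L : ℤ) - j)) = y1
    generalize (1 - (q ^ 2) ^ (j + 1)) = y2
    generalize (1 - (q ^ 2) ^ (L + n + 2)) = y3
    generalize (q ^ 2) ^ n = y4
    field_simp
  have hgoal : ∀ a b c d : ℂ, ∀ X, a + c = X → a + (b + c) + d = X + (b + d) := by
    intro a b c d X h; rw [← h]; ring
  rw [hgoal _ _ _ _ _ hUP, e1]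
  rcases s with _ | s
  · have e3 : Qf q L z n (j - 1) k * (1 - (q ^ 2) ^ j) = 0 := by
      rcases Nat.eq_zero_or_pos j with h | h
      · rw [h]; simp
      · have : Qf q L z n (j - 1) k = 0 := if_neg (by omega)
        rw [this, zero_mul]
    have e5 : Qf q L z (n - 1) j k * (1 - (q ^ 2) ^ n) = 0 := by
      rcases Nat.eq_zero_or_pos n with h | h
      · rw [h]; simp
      · have : Qf q L z (n - 1) j k = 0 := if_neg (by omega)
        rw [this, zero_mul]
    have hr := Chat_rec0 hp ((q ^ 2) ^ (k + 1)) z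
    have hkn : k + 1 = n + j + 1 := by omega
    rw [hkn] at hr ⊢
    rw [zero_add, pow_one]
    rw [show ∀ x y a b c : ℂ, x + (Qf q L z n (j - 1) k * (a * (b * (1 - (q ^ 2) ^ j)) / c) + y) =
      x + ((Qf q L z n (j - 1) k * (1 - (q ^ 2) ^ j)) * (a * b / c) + y) by intros; ring, e3]
    rw [show ∀ x y a b c : ℂ, x + (y + Qf q L z (n - 1) j k * (a * ((1 - (q ^ 2) ^ n) * b) / c)) =
      x + (y + (Qf q L z (n - 1) j k * (1 - (q ^ 2) ^ n)) * (a * b / c)) by intros; ring, e5]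
    generalize Chat (q ^ 2) ((q ^ 2) ^ (n + j + 1)) 1 z = C1 at hr ⊢
    generalize Chat (q ^ 2) ((q ^ 2) ^ (n + j + 1)) 0 z = C0 at hr ⊢
    clear hUP e1 hup2 hup' hup e2 e4 hFs
    generalize (1 - (q ^ 2) ^ (n + j + 1)) = D1 at hr hD1 ⊢
    generalize Sf (q ^ 2) L k n j = S0
    generalize qp (q ^ 2) (q ^ 2) (n + j + k + 1) = F1 at hF1 ⊢
    rw [zero_mul, zero_mul, add_zero, add_zero]
    refine Eq.trans (b := Kf q L k * q ^ (n + j) / (2 * D1) * S0 / F1 * ((z + z⁻¹) * D1 * C0)) ?_ ?_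
    · field_simp
    · rw [← hr]; ring
  · have hdown := Sf_down hp0 L k n j (by omega)
    have hr := Chat_rec hp ((q ^ 2) ^ (k + 1)) z hz s
    have e3 : Qf q L z n (j - 1) k * (1 - (q ^ 2) ^ j) =
        Kf q L k * q ^ (k + s) / qp (q ^ 2) (q ^ 2) (n + j + k) *
        Sf (q ^ 2) L k n (j - 1) * Chat (q ^ 2) ((q ^ 2) ^ (k + 1)) s z * (1 - (q ^ 2) ^ j) := by
      rcases Nat.eq_zero_or_pos j with h | h
      · rw [h]; simp
      · unfold Qf
        rw [if_pos (by omega), show n + (j - 1) = k + s by omega, show k + s + k + 1 = n + j + k by omega,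
          show k + s - k = s by omega]
    have e5 : Qf q L z (n - 1) j k * (1 - (q ^ 2) ^ n) =
        Kf q L k * q ^ (k + s) / qp (q ^ 2) (q ^ 2) (n + j + k) *
        Sf (q ^ 2) L k (n - 1) j * Chat (q ^ 2) ((q ^ 2) ^ (k + 1)) s z * (1 - (q ^ 2) ^ n) := by
      rcases Nat.eq_zero_or_pos n with h | h
      · rw [h]; simp
      · unfold Qf
        rw [if_pos (by omega), show n - 1 + j = k + s by omega, show k + s + k + 1 = n + j + k by omega,
          show k + s - k = s by omega]
    rw [show ∀ x y a b c : ℂ, x + (Qf q L z n (j - 1) k * (a * (b * (1 - (q ^ 2) ^ j)) / c) + y) =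
      x + ((Qf q L z n (j - 1) k * (1 - (q ^ 2) ^ j)) * (a * b / c) + y) by intros; ring, e3]
    rw [show ∀ x y a b c : ℂ, x + (y + Qf q L z (n - 1) j k * (a * ((1 - (q ^ 2) ^ n) * b) / c)) =
      x + (y + (Qf q L z (n - 1) j k * (1 - (q ^ 2) ^ n)) * (a * b / c)) by intros; ring, e5]
    have t1 : (q ^ 2) ^ (k + 1) * (q ^ 2) ^ (s + 1) = (q ^ 2) ^ (n + j + 1) := by
      rw [← pow_add]; congr 1; omega
    have t2 : ((q ^ 2) ^ (k + 1)) ^ 2 * (q ^ 2) ^ s = (q ^ 2) ^ (n + j + k + 1) := by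
      rw [← pow_mul (q ^ 2), ← pow_add]; congr 1; omega
    have t3 : q ^ (n + j) = q ^ (k + s) * q := by rw [← pow_succ]; congr 1
    rw [t1, t2] at hr
    rw [t3]
    have hF0 := F_ne hp (n + j + k)
    have hD3 : 1 - (q ^ 2) ^ (n + j + k + 1) ≠ 0 := sub_ne_zero.mpr (hp (n + j + k)).symm
    rw [F_succ _ (n + j + k)]
    have key : Sf (q ^ 2) L k n j =
        ((q ^ 2) ^ n * (1 - (q ^ 2) ^ ((L : ℤ) - j + 1)) * (1 - (q ^ 2) ^ j) * Sf (q ^ 2) L k n (j - 1)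
    + (1 - (q ^ 2) ^ n) * (1 - (q ^ 2) ^ (L + n + 1)) * Sf (q ^ 2) L k (n - 1) j) /
      (1 - (q ^ 2) ^ ((L : ℤ) - j + n + 1)) := by
      rw [eq_div_iff hDj, ← hdown]; ring
    have hr' : (z + z⁻¹) / 2 * Chat (q ^ 2) ((q ^ 2) ^ (k + 1)) (s + 1) z =
        ((1 - (q ^ 2) ^ (s + 2)) * Chat (q ^ 2) ((q ^ 2) ^ (k + 1)) (s + 2) z +
        (1 - (q ^ 2) ^ (n + j + k + 1)) * Chat (q ^ 2) ((q ^ 2) ^ (k + 1)) s z) /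
          (2 * (1 - (q ^ 2) ^ (n + j + 1))) := by
      rw [hr, eq_div_iff (mul_ne_zero two_ne_zero hD1)]
      ring
    have hL : ∀ a b c : ℂ, (z + z⁻¹) / 2 * (a * b * c) = a * b * ((z + z⁻¹) / 2 * c) := by intros; ring
    rw [hL, hr', key]
    rw [show s + 1 + 1 = s + 2 by rfl]
    generalize (1 - (q ^ 2) ^ (n + j + 1)) = D1 at *
    generalize (1 - (q ^ 2) ^ ((L : ℤ) - j + n + 1)) = Dj at *
    generalize (1 - (q ^ 2) ^ (n + j + k + 1)) = D3 at *
    generalize (1 - (q ^ 2) ^ ((L : ℤ) - j + 1)) = y1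
    generalize (1 - (q ^ 2) ^ (L + n + 1)) = y3
    generalize (q ^ 2) ^ n = y4
    generalize (q ^ 2) ^ j = y5
    generalize (q ^ 2) ^ (s + 2) = y6
    generalize Sf (q ^ 2) L k n (j - 1) = S1
    generalize Sf (q ^ 2) L k (n - 1) j = S2
    field_simp

lemma qz {q : ℂ} (a : ℤ) : (q ^ 2) ^ a = q ^ (2 * a) := by
  rw [_root_.zpow_mul]; norm_cast

lemma qn {q : ℂ} (a : ℕ) : (q ^ 2) ^ a = q ^ (2 * (a : ℤ)) := by
  rw [← qz, zpow_natCast]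

lemma evP_term {q : ℂ} (hq : q ≠ 0) (hp : ∀ n : ℕ, (q ^ 2) ^ (n + 1) ≠ 1) (L : ℕ)
    (z : ℂ) (n i j k : ℕ) (hj : j ≤ L) (hk : k ≤ L) (hkn : k ≤ n + j) :
          ((-1 : ℂ) ^ k *
            q ^ ((n : ℤ) + (2 * (k : ℤ) + 1) * ((k : ℤ) - (i : ℤ)) +
                (j : ℤ) * (2 * (k : ℤ) + 1) + 2 * (k : ℤ) * ((L : ℤ) + (n : ℤ) + 1) -
                (k : ℤ) ^ 2) *
            (qp (q ^ 2) (q ^ 2) k * qp (q ^ 2) (q ^ 2) (k + i) /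
              (qp (q ^ 2) (q ^ 2) (2 * k) * qp (q ^ 2) (q ^ 2) i)) *
            (qp (q ^ (-(2 * (L : ℤ)))) (q ^ 2) k *
                qp (q ^ (-(2 * (j : ℤ) + 2 * (n : ℤ)))) (q ^ 2) k /
              (qp (q ^ 2) (q ^ 2) k * qp (q ^ (2 * (L : ℤ) + 4)) (q ^ 2) k)) *
            (qp (q ^ 2) (q ^ 2) (n + j - k) /
              qp (q ^ (4 * (k : ℤ) + 4)) (q ^ 2) (n + j - k)) *
            qRacah (q ^ 2) 1 1 (q ^ (-(2 * (n : ℤ) + 2 * (j : ℤ) + 2)))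
              (q ^ (-(2 * (L : ℤ) + 2))) k j) *
        (Chat (q ^ 2) (q ^ (-(2 * (k : ℤ)))) (k - i) z *
          Chat (q ^ 2) (q ^ (2 * (k : ℤ) + 2)) (n + j - k) z) =
      Uf q z i k * Qf q L z n j k := by
  rw [qRacah_eq hq hp L k n j hj]
  unfold Uf Qf Kf
  rw [if_pos hkn]
  rw [show q ^ (-(2 * (j : ℤ) + 2 * (n : ℤ))) = (q ^ 2) ^ (-((n + j : ℕ) : ℤ)) by
    rw [qz]; congr 1; push_cast; ring]
  rw [show q ^ (-(2 * (L : ℤ))) = (q ^ 2) ^ (-(L : ℤ)) by rw [qz, mul_neg]]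
  rw [show q ^ (2 * (L : ℤ) + 4) = (q ^ 2) ^ (L + 1 + 1) by rw [qn]; congr 1]
  rw [show q ^ (4 * (k : ℤ) + 4) = (q ^ 2) ^ (2 * k + 1 + 1) by rw [qn]; congr 1; push_cast; ring]
  rw [show q ^ (2 * (k : ℤ) + 2) = (q ^ 2) ^ (k + 1) by rw [qn]; congr 1]
  rw [qp_neg hq (n + j) k]
  have hu := uu_F (q ^ 2) hkn
  have hs := qp_shift (p := q ^ 2) (2 * k + 1) (n + j - k)
  rw [show 2 * k + 1 + (n + j - k) = n + j + k + 1 by omega] at hs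
  have hs2 := qp_shift (p := q ^ 2) (L + 1) k
  have n1 := F_ne hp (n + j + k + 1)
  have n2 := F_ne hp (L + 1 + k)
  have n3 := F_ne hp (n + j)
  have n4 := F_ne hp L
  have n5 := F_ne hp k
  have n6 := F_ne hp (2 * k)
  have n7 := F_ne hp i
  have n8 : qp ((q ^ 2) ^ (2 * k + 1 + 1)) (q ^ 2) (n + j - k) ≠ 0 := by
    intro h; rw [h, zero_mul] at hs; exact n1 hs.symm
  have n9 : qp ((q ^ 2) ^ (L + 1 + 1)) (q ^ 2) k ≠ 0 := by
    intro h; rw [h, zero_mul] at hs2; exact n2 hs2.symm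
  have n10 := F_ne hp (2 * k + 1)
  have hexp : q ^ ((n : ℤ) + (2 * (k : ℤ) + 1) * ((k : ℤ) - (i : ℤ)) +
                (j : ℤ) * (2 * (k : ℤ) + 1) + 2 * (k : ℤ) * ((L : ℤ) + (n : ℤ) + 1) -
                (k : ℤ) ^ 2) * q ^ ((k : ℤ) ^ 2 - k - 2 * ((n + j : ℕ) : ℤ) * k) =
      q ^ ((2 * (k : ℤ) + 1) * ((k : ℤ) - (i : ℤ))) * q ^ (2 * (k : ℤ) * ((L : ℤ) + 1) - k) *
        q ^ (n + j) := by
    rw [← zpow_natCast q (n + j), ← zpow_add₀ hq, ← zpow_add₀ hq, ← zpow_add₀ hq]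
    congr 1; push_cast; ring
  have hm : ((-1 : ℂ) ^ k) * (-1) ^ k = 1 := by rw [← mul_pow]; simp
  have hu' : uu (q ^ 2) k ((n + j : ℕ) : ℤ) * qp (q ^ 2) (q ^ 2) (n + j - k) / qp (q ^ 2) (q ^ 2) (n + j) = 1 := by
    rw [hu, div_self n3]
  have hs' : 1 / qp ((q ^ 2) ^ (2 * k + 1 + 1)) (q ^ 2) (n + j - k) =
      qp (q ^ 2) (q ^ 2) (2 * k + 1) / qp (q ^ 2) (q ^ 2) (n + j + k + 1) := by
    rw [← hs]; field_simp
  generalize q ^ ((n : ℤ) + (2 * (k : ℤ) + 1) * ((k : ℤ) - (i : ℤ)) +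
                (j : ℤ) * (2 * (k : ℤ) + 1) + 2 * (k : ℤ) * ((L : ℤ) + (n : ℤ) + 1) -
                (k : ℤ) ^ 2) = E1 at *
  generalize q ^ ((k : ℤ) ^ 2 - k - 2 * ((n + j : ℕ) : ℤ) * k) = E2 at *
  generalize q ^ ((2 * (k : ℤ) + 1) * ((k : ℤ) - (i : ℤ))) = E3 at *
  generalize q ^ (2 * (k : ℤ) * ((L : ℤ) + 1) - k) = E4 at *
  generalize q ^ (n + j) = E5 at *
  generalize Chat (q ^ 2) (q ^ (-(2 * (k : ℤ)))) (k - i) z = C1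
  generalize Chat (q ^ 2) ((q ^ 2) ^ (k + 1)) (n + j - k) z = C2
  generalize qp ((q ^ 2) ^ (2 * k + 1 + 1)) (q ^ 2) (n + j - k) = Y1 at *
  generalize qp ((q ^ 2) ^ (L + 1 + 1)) (q ^ 2) k = Y2 at *
  generalize uu (q ^ 2) k ((n + j : ℕ) : ℤ) = Y3 at *
  generalize qp (q ^ 2) (q ^ 2) (n + j - k) = Y4 at *
  generalize qp (q ^ 2) (q ^ 2) (n + j + k + 1) = Y5 at *
  generalize qp (q ^ 2) (q ^ 2) (n + j) = Y6 at *
  generalize qp (q ^ 2) (q ^ 2) (2 * k + 1) = Y7 at *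
  generalize qp (q ^ 2) (q ^ 2) (2 * k) = Y8 at *
  generalize qp (q ^ 2) (q ^ 2) (k + i) = Y9 at *
  generalize qp (q ^ 2) (q ^ 2) k = Y10 at *
  generalize qp (q ^ 2) (q ^ 2) i = Y11 at *
  generalize qp (q ^ 2) (q ^ 2) L = Y12 at *
  generalize qp ((q ^ 2) ^ (-(L : ℤ))) (q ^ 2) k = Y13
  generalize Sf (q ^ 2) L k n j = S
  refine Eq.trans (b := ((-1 : ℂ) ^ k * (-1) ^ k) * (E1 * E2) * (Y3 * Y4 / Y6) * (1 / Y1) *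
    (Y10 * Y9 / (Y8 * Y11)) * (Y13 / (Y10 * Y2)) * (S / Y12) * (C1 * C2)) ?_ ?_
  · ring
  · rw [hm, hexp, hu', hs']; ring

lemma evP_entry {q : ℂ} (hq : q ≠ 0) (hp : ∀ n : ℕ, (q ^ 2) ^ (n + 1) ≠ 1) (L : ℕ)
    (C : ℂ → ℂ → ℕ → Polynomial ℂ) (hC : IsUltra C) (z : ℂ) (hz : z ≠ 0) (n : ℕ)
    (i j : Fin (L + 1)) :
    evP q L C n ((z + z⁻¹) / 2) i j =
      ∑ k ∈ Finset.Icc (i : ℕ) L, Uf q z i k * Qf q L z n j k := by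
  have hCh : ∀ p β k, (C p β k).eval ((z + z⁻¹) / 2) = Chat p β k z := fun p β k => (hC p β k).2 z hz
  simp only [evP, Pm, Matrix.map_apply, Matrix.of_apply, Polynomial.eval_finsetSum, Polynomial.eval_mul,
    Polynomial.eval_C, hCh]
  refine Eq.trans (Finset.sum_congr rfl fun k hk => ?_)
    (Finset.sum_subset (s₁ := Finset.Icc (i : ℕ) (min L (n + (j : ℕ)))) ?_ ?_)
  · rw [Finset.mem_Icc, le_min_iff] at hk
    exact evP_term hq hp L z n i j k (by omega) hk.2.1 hk.2.2
  · intro k hk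
    rw [Finset.mem_Icc] at hk ⊢
    omega
  · intro k hk hk2
    rw [Finset.mem_Icc] at hk hk2
    have : Qf q L z n j k = 0 := if_neg (by omega)
    rw [this, mul_zero]

lemma Sf_zero {p : ℂ} (hp0 : p ≠ 0) (hp : ∀ n : ℕ, p ^ (n + 1) ≠ 1) (L k j : ℕ) (hk : k ≤ j) (hj : j ≤ L) :
    Sf p L k 0 j * (∏ r ∈ Finset.range k, (p ^ (L + 1) - p ^ (r + 1))) =
      qp p p j * qp p p L * qp (p ^ (L + 1 + 1)) p k := by
  have hy : ∀ m : ℕ, m ≤ k → 1 - p ^ (L + 1) * p ^ (-(m : ℤ)) = 1 - p ^ (L - m + 1) := by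
    intro m hm
    rw [← zpow_natCast p (L + 1), ← zpow_add₀ hp0, ← zpow_natCast p (L - m + 1)]
    congr 2
    push_cast [Nat.cast_sub (show m ≤ L by omega)]
    ring
  have hs := saal (y := p ^ (L + 1)) hp0 hp k
    (fun m hm => by rw [hy m hm]; exact sub_ne_zero.mpr (hp _).symm)
  rw [pow_succ p (L + 1), ← hs]
  have : Sf p L k 0 j = qp p p j * qp p p L * ∑ m ∈ Finset.range (k + 1),
      qp (p ^ (-(k : ℤ))) p m * qp (p ^ (k + 1)) p m / qp p p m ^ 2 *
        ((1 - p ^ (L + 1)) / (1 - p ^ (L + 1) * p ^ (-(m : ℤ)))) := by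
    unfold Sf
    rw [Finset.mul_sum]
    refine Finset.sum_congr rfl fun m hm => ?_
    have hm' : m ≤ k := by rw [Finset.mem_range] at hm; omega
    rw [hy m hm']
    have h1 := uu_F p (show m ≤ j by omega)
    have h2 := uu_F p (show m ≤ L + 1 by omega)
    rw [show L + 1 - m = L - m + 1 by omega, F_succ, F_succ] at h2
    have h3 : 1 - p ^ (L - m + 1) ≠ 0 := sub_ne_zero.mpr (hp _).symm
    rw [zero_add, zero_add]
    rw [← h1]
    have h4 : qp p p L * ((1 - p ^ (L + 1)) / (1 - p ^ (L - m + 1))) =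
      uu p m ((L + 1 : ℕ) : ℤ) * qp p p (L - m) := by
      rw [← mul_div_assoc, ← h2, div_eq_iff h3]; ring
    calc _ = qp (p ^ (-(k : ℤ))) p m * qp (p ^ (k + 1)) p m / qp p p m ^ 2 *
        (uu p m j * qp p p (j - m)) * (uu p m ((L + 1 : ℕ) : ℤ) * qp p p (L - m)) := by ring
      _ = _ := by rw [← h4]; ring
  rw [this]
  ring

lemma X_prod {p : ℂ} (hp0 : p ≠ 0) (L k : ℕ) :
    qp (p ^ (-(L : ℤ))) p k * p ^ ((L + 1) * k) = ∏ r ∈ Finset.range k, (p ^ (L + 1) - p ^ (r + 1)) := by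
  rw [pow_mul, qp, ← Finset.card_range k, ← Finset.prod_const, Finset.card_range, ← Finset.prod_mul_distrib]
  refine Finset.prod_congr rfl fun r _ => ?_
  rw [_root_.zpow_neg, zpow_natCast]
  field_simp
  ring

lemma Qf_zero {q : ℂ} (hq : q ≠ 0) (hp : ∀ n : ℕ, (q ^ 2) ^ (n + 1) ≠ 1) (L : ℕ) (z : ℂ)
    (j k : ℕ) (hk : k ≤ j) (hj : j ≤ L) :
    Qf q L z 0 j k = q ^ (-(k : ℤ)) * qp (q ^ 2) (q ^ 2) j * qp (q ^ 2) (q ^ 2) (2 * k + 1) /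
      qp (q ^ 2) (q ^ 2) k * (q ^ j / qp (q ^ 2) (q ^ 2) (j + k + 1) *
      Chat (q ^ 2) ((q ^ 2) ^ (k + 1)) (j - k) z) := by
  have hp0 : q ^ 2 ≠ 0 := pow_ne_zero _ hq
  have h := Sf_zero hp0 hp L k j hk hj
  rw [← X_prod hp0] at h
  unfold Qf Kf
  rw [if_pos (by omega), zero_add]
  have hs2 := qp_shift (p := q ^ 2) (L + 1) k
  have n2 := F_ne hp (L + 1 + k)
  have n4 := F_ne hp L
  have n5 := F_ne hp k
  have n9 : qp ((q ^ 2) ^ (L + 1 + 1)) (q ^ 2) k ≠ 0 := by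
    intro h; rw [h, zero_mul] at hs2; exact n2 hs2.symm
  have he : q ^ (2 * (k : ℤ) * ((L : ℤ) + 1) - k) = q ^ (-(k : ℤ)) * (q ^ 2) ^ ((L + 1) * k) := by
    rw [qn, ← zpow_add₀ hq]; congr 1; push_cast; ring
  rw [he]
  generalize (q ^ 2) ^ ((L + 1) * k) = E at *
  generalize q ^ (-(k : ℤ)) = E1 at *
  generalize qp ((q ^ 2) ^ (L + 1 + 1)) (q ^ 2) k = Y at *
  generalize qp ((q ^ 2) ^ (-(L : ℤ))) (q ^ 2) k = X at *
  generalize Sf (q ^ 2) L k 0 j = S at *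
  generalize qp (q ^ 2) (q ^ 2) L = FL at *
  generalize qp (q ^ 2) (q ^ 2) j = Fj at *
  generalize qp (q ^ 2) (q ^ 2) k = Fk at *
  have h' : Fj = S * (X * E) / (FL * Y) := by
    rw [h]; field_simp
  rw [h']
  ring

lemma biorth_abs (l v α γ β : ℕ → ℂ) (a b : ℂ) (h0 : γ 0 = 0)
    (hl : ∀ N, (a - α N) * l N = γ N * l (N - 1) + if 2 ≤ N then β (N - 2) * l (N - 2) else 0)
    (hv : ∀ N, (b - α N) * v N = γ (N + 1) * v (N + 1) + β N * v (N + 2)) (M : ℕ) :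
    (a - b) * ∑ n ∈ Finset.range (M + 1), l n * v n =
      -(γ (M + 1) * l M * v (M + 1) + β M * l M * v (M + 2) +
        if 1 ≤ M then β (M - 1) * l (M - 1) * v (M + 1) else 0) := by
  induction M with
  | zero =>
    have e1 := hl 0
    have e2 := hv 0
    simp [h0] at e1 e2 ⊢
    rcases e1 with h | h
    · linear_combination (l 0 * v 0) * h - l 0 * e2
    · rw [h]; ring
  | succ M ih =>
    rw [Finset.sum_range_succ, mul_add, ih]
    have e1 := hl (M + 1)
    have e2 := hv (M + 1)
    rcases M with _ | M
    · simp at e1 e2 ⊢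
      linear_combination v 1 * e1 - l 1 * e2
    · rw [if_pos (by omega)] at e1
      rw [if_pos (by omega), if_pos (by omega)]
      simp only [Nat.add_sub_cancel, show M + 1 + 1 - 2 = M by omega] at e1 e2 ⊢
      linear_combination v (M + 2) * e1 - l (M + 2) * e2

def lvf (q z : ℂ) (m n : ℕ) : ℂ :=
  if m ≤ n then q ^ n / qp (q ^ 2) (q ^ 2) (n + m + 1) * Chat (q ^ 2) ((q ^ 2) ^ (m + 1)) (n - m) z else 0

def vvf (q z : ℂ) (k n : ℕ) : ℂ :=
  if n ≤ k then (1 / (q * (q ^ 2) ^ k)) ^ n * qp (q ^ 2) (q ^ 2) (k + n) *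
    Chat (q ^ 2) (q ^ (-(2 * (k : ℤ)))) (k - n) z else 0

def alf (q : ℂ) (n : ℕ) : ℂ := 1 / (q ^ 2) ^ n + (q ^ 2) ^ (n + 1)
def gaf (q z : ℂ) (n : ℕ) : ℂ := -((z + z⁻¹) * q * (1 - (q ^ 2) ^ n) / (q ^ 2) ^ n)
def bef (q : ℂ) (n : ℕ) : ℂ := 1 / (q ^ 2) ^ (n + 1)

lemma lvf_rec {q : ℂ} (hq : q ≠ 0) (hp : ∀ n : ℕ, (q ^ 2) ^ (n + 1) ≠ 1) (z : ℂ) (hz : z ≠ 0) (m N : ℕ) :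
    (alf q m - alf q N) * lvf q z m N = gaf q z N * lvf q z m (N - 1) +
      if 2 ≤ N then bef q (N - 2) * lvf q z m (N - 2) else 0 := by
  rcases lt_trichotomy N m with h | h | h
  · have e1 : lvf q z m N = 0 := if_neg (by omega)
    have e2 : lvf q z m (N - 1) = 0 := if_neg (by omega)
    have e3 : lvf q z m (N - 2) = 0 := if_neg (by omega)
    simp [e1, e2, e3]
  · have e2 : gaf q z N * lvf q z m (N - 1) = 0 := by
      rcases Nat.eq_zero_or_pos N with h0 | h0
      · rw [h0]; simp [gaf]
      · have : lvf q z m (N - 1) = 0 := if_neg (by omega)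
        rw [this, mul_zero]
    have e3 : (if 2 ≤ N then bef q (N - 2) * lvf q z m (N - 2) else 0) = 0 := by
      split_ifs with h0
      · have : lvf q z m (N - 2) = 0 := if_neg (by omega)
        rw [this, mul_zero]
      · rfl
    rw [e2, e3, h]; ring
  obtain ⟨s, rfl⟩ : ∃ s, N = m + s + 1 := ⟨N - m - 1, by omega⟩
  have e1 : lvf q z m (m + s + 1) = q ^ (m + s + 1) / qp (q ^ 2) (q ^ 2) (m + s + m + 1 + 1) *
    Chat (q ^ 2) ((q ^ 2) ^ (m + 1)) (s + 1) z := by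
    unfold lvf
    rw [if_pos (by omega), show m + s + 1 - m = s + 1 by omega,
      show m + s + 1 + m + 1 = m + s + m + 1 + 1 by ring]
  have e2 : lvf q z m (m + s + 1 - 1) = q ^ (m + s) / qp (q ^ 2) (q ^ 2) (m + s + m + 1) *
    Chat (q ^ 2) ((q ^ 2) ^ (m + 1)) s z := by
    unfold lvf
    rw [if_pos (by omega), show m + s + 1 - 1 = m + s by omega, show m + s - m = s by omega]
  have hD : 1 - (q ^ 2) ^ (m + s + m + 1 + 1) ≠ 0 := sub_ne_zero.mpr (hp _).symm
  rw [e1, e2, F_succ _ (m + s + m + 1)]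
  have al : alf q m - alf q (m + s + 1) =
      -(1 - (q ^ 2) ^ (s + 1)) * (1 - (q ^ 2) ^ (m + s + m + 1 + 1)) / (q ^ 2) ^ (m + s + 1) := by
    unfold alf
    simp only [pow_add]
    field_simp
    ring
  rw [al]
  have hF := F_ne hp (m + s + m + 1)
  rcases s with _ | s
  · have e3 : (if 2 ≤ m + 0 + 1 then bef q (m + 0 + 1 - 2) * lvf q z m (m + 0 + 1 - 2) else 0) = 0 := by
      split_ifs with h0
      · have : lvf q z m (m + 0 + 1 - 2) = 0 := if_neg (by omega)
        rw [this, mul_zero]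
      · rfl
    have hr := Chat_rec0 hp ((q ^ 2) ^ (m + 1)) z
    rw [e3, gaf, add_zero, add_zero, pow_succ q m]
    rw [add_zero] at hF hD
    simp only [zero_add, pow_one]
    generalize (1 - (q ^ 2) ^ (m + m + 1 + 1)) = D at *
    generalize qp (q ^ 2) (q ^ 2) (m + m + 1) = F at *
    generalize Chat (q ^ 2) ((q ^ 2) ^ (m + 1)) 1 z = C1 at *
    generalize Chat (q ^ 2) ((q ^ 2) ^ (m + 1)) 0 z = C0 at *
    calc _ = -(q ^ m * q / F / (q ^ 2) ^ (m + 1)) * ((1 - q ^ 2) * C1) := by field_simp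
      _ = _ := by rw [hr]; ring
  · have e3 : lvf q z m (m + (s + 1) + 1 - 2) = q ^ (m + s) / qp (q ^ 2) (q ^ 2) (m + s + m + 1) *
      Chat (q ^ 2) ((q ^ 2) ^ (m + 1)) s z := by
      unfold lvf
      rw [if_pos (by omega), show m + (s + 1) + 1 - 2 = m + s by omega, show m + s - m = s by omega]
    have hr := Chat_rec hp ((q ^ 2) ^ (m + 1)) z hz s
    rw [if_pos (by omega), e3, gaf, bef]
    rw [show m + (s + 1) + m + 1 = m + s + m + 1 + 1 by ring] at hF hD ⊢
    rw [F_succ] at hF ⊢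
    have hF1 := left_ne_zero_of_mul hF
    have hF2 := right_ne_zero_of_mul hF
    rw [show (q ^ 2) ^ (m + 1) * (q ^ 2) ^ (s + 1) = (q ^ 2) ^ (m + (s + 1) + 1) by ring,
      show ((q ^ 2) ^ (m + 1)) ^ 2 * (q ^ 2) ^ s = (q ^ 2) ^ (m + s + m + 1 + 1) by ring] at hr
    rw [show m + (s + 1) + 1 - 2 + 1 = m + s + 1 by omega]
    rw [show s + 1 + 1 = s + 2 by rfl, show m + (s + 1) + 1 = m + s + 2 by ring] at *
    rw [show m + (s + 1) = m + s + 1 by ring]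
    rw [pow_add q (m + s) 2, pow_succ q (m + s)]
    generalize (1 - (q ^ 2) ^ (m + s + m + 1 + 1 + 1)) = D at *
    generalize (1 - (q ^ 2) ^ (m + s + m + 1 + 1)) = D1 at *
    generalize qp (q ^ 2) (q ^ 2) (m + s + m + 1) = F at *
    generalize Chat (q ^ 2) ((q ^ 2) ^ (m + 1)) (s + 2) z = C2 at *
    generalize Chat (q ^ 2) ((q ^ 2) ^ (m + 1)) (s + 1) z = C1 at *
    generalize Chat (q ^ 2) ((q ^ 2) ^ (m + 1)) s z = C0 at *
    have hpp : (q ^ 2) ^ (m + s + 2) = (q ^ 2) ^ (m + s + 1) * q ^ 2 := by ring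
    have hP : (q ^ 2) ^ (m + s + 1) ≠ 0 := pow_ne_zero _ (pow_ne_zero _ hq)
    generalize 1 - (q ^ 2) ^ (s + 2) = D3 at *
    generalize 1 - (q ^ 2) ^ (m + s + 2) = D4 at *
    rw [hpp]
    generalize (q ^ 2) ^ (m + s + 1) = P at *
    generalize q ^ (m + s) = R at *
    calc _ = -(R / F / D1 / P) * (D3 * C2) := by field_simp
      _ = _ := by rw [hr]; field_simp; ring

lemma vvf_rec {q : ℂ} (hq : q ≠ 0) (hp : ∀ n : ℕ, (q ^ 2) ^ (n + 1) ≠ 1) (z : ℂ) (hz : z ≠ 0) (k n : ℕ) :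
    (alf q k - alf q n) * vvf q z k n = gaf q z (n + 1) * vvf q z k (n + 1) +
      bef q n * vvf q z k (n + 2) := by
  rcases lt_trichotomy k n with h | h | h
  · have e1 : vvf q z k n = 0 := if_neg (by omega)
    have e2 : vvf q z k (n + 1) = 0 := if_neg (by omega)
    have e3 : vvf q z k (n + 2) = 0 := if_neg (by omega)
    simp [e1, e2, e3]
  · have e2 : vvf q z k (n + 1) = 0 := if_neg (by omega)
    have e3 : vvf q z k (n + 2) = 0 := if_neg (by omega)
    rw [e2, e3, h]; ring
  obtain ⟨s, rfl⟩ : ∃ s, k = n + s + 1 := ⟨k - n - 1, by omega⟩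
  have e1 : vvf q z (n + s + 1) n = (1 / (q * (q ^ 2) ^ (n + s + 1))) ^ n *
      qp (q ^ 2) (q ^ 2) (n + s + 1 + n) *
      Chat (q ^ 2) (q ^ (-(2 * ((n + s + 1 : ℕ) : ℤ)))) (s + 1) z := by
    unfold vvf
    rw [if_pos (by omega), show n + s + 1 - n = s + 1 by omega]
  have e2 : vvf q z (n + s + 1) (n + 1) = (1 / (q * (q ^ 2) ^ (n + s + 1))) ^ (n + 1) *
      (qp (q ^ 2) (q ^ 2) (n + s + 1 + n) * (1 - (q ^ 2) ^ (n + s + 1 + n + 1))) *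
      Chat (q ^ 2) (q ^ (-(2 * ((n + s + 1 : ℕ) : ℤ)))) s z := by
    unfold vvf
    rw [if_pos (by omega), show n + s + 1 - (n + 1) = s by omega, ← F_succ]
    rfl
  rw [e1, e2]
  have al : alf q (n + s + 1) - alf q n =
      (1 - (q ^ 2) ^ (s + 1)) * (1 - (q ^ 2) ^ (n + s + 1 + n + 1)) / (q ^ 2) ^ (n + s + 1) := by
    unfold alf
    simp only [pow_add]
    field_simp
    ring
  rw [al, gaf, bef]
  rcases s with _ | s
  · have e3 : vvf q z (n + 0 + 1) (n + 2) = 0 := if_neg (by omega)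
    have hr := Chat_rec0 hp (q ^ (-(2 * ((n + 0 + 1 : ℕ) : ℤ)))) z
    rw [e3]
    generalize Chat (q ^ 2) (q ^ (-(2 * ((n + 0 + 1 : ℕ) : ℤ)))) 0 z = C0 at *
    simp only [zero_add] at hr ⊢
    generalize Chat (q ^ 2) (q ^ (-(2 * ((n + 0 + 1 : ℕ) : ℤ)))) 1 z = C1 at *
    have hb : q ^ (-(2 * ((n + 0 + 1 : ℕ) : ℤ))) = 1 / (q ^ 2) ^ (n + 1) := by
      rw [_root_.zpow_neg, ← qn]; simp
    rw [hb] at hr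
    rw [add_zero] at *
    rw [pow_succ (1 / (q * (q ^ 2) ^ (n + 1))) n]
    clear al e1 e2 e3 hb
    generalize (1 / (q * (q ^ 2) ^ (n + 1))) ^ n = T
    have hP : (q ^ 2) ^ (n + 1) ≠ 0 := pow_ne_zero _ (pow_ne_zero _ hq)
    generalize (1 - (q ^ 2) ^ (n + 1 + n + 1)) = D
    generalize (q ^ 2) ^ (n + 1) = P at *
    generalize qp (q ^ 2) (q ^ 2) (n + 1 + n) = F
    rw [pow_one]
    calc _ = D / P * T * F * ((1 - q ^ 2) * C1) := by ring
      _ = _ := by rw [hr]; field_simp; ring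
  · have e3 : vvf q z (n + (s + 1) + 1) (n + 2) = (1 / (q * (q ^ 2) ^ (n + (s + 1) + 1))) ^ (n + 2) *
      (qp (q ^ 2) (q ^ 2) (n + (s + 1) + 1 + n) * (1 - (q ^ 2) ^ (n + (s + 1) + 1 + n + 1)) *
        (1 - (q ^ 2) ^ (n + (s + 1) + 1 + n + 1 + 1))) *
      Chat (q ^ 2) (q ^ (-(2 * ((n + (s + 1) + 1 : ℕ) : ℤ)))) s z := by
      unfold vvf
      rw [if_pos (by omega), show n + (s + 1) + 1 - (n + 2) = s by omega, ← F_succ, ← F_succ]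
      rfl
    rw [e3]
    have hr := Chat_rec hp (q ^ (-(2 * ((n + (s + 1) + 1 : ℕ) : ℤ)))) z hz s
    generalize Chat (q ^ 2) (q ^ (-(2 * ((n + (s + 1) + 1 : ℕ) : ℤ)))) s z = C0 at *
    rw [show s + 1 + 1 = s + 2 by rfl]
    generalize Chat (q ^ 2) (q ^ (-(2 * ((n + (s + 1) + 1 : ℕ) : ℤ)))) (s + 1) z = C1 at *
    generalize Chat (q ^ 2) (q ^ (-(2 * ((n + (s + 1) + 1 : ℕ) : ℤ)))) (s + 2) z = C2 at *
    have hb : q ^ (-(2 * ((n + (s + 1) + 1 : ℕ) : ℤ))) = 1 / (q ^ 2) ^ (n + (s + 1) + 1) := by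
      rw [_root_.zpow_neg, ← qn]; simp
    have hp0 : q ^ 2 ≠ 0 := pow_ne_zero _ hq
    have t1 : q ^ (-(2 * ((n + (s + 1) + 1 : ℕ) : ℤ))) * (q ^ 2) ^ (s + 1) = 1 / (q ^ 2) ^ (n + 1) := by
      rw [hb, div_mul_eq_mul_div, div_eq_div_iff (pow_ne_zero _ hp0) (pow_ne_zero _ hp0)]; ring
    have t2 : (q ^ (-(2 * ((n + (s + 1) + 1 : ℕ) : ℤ)))) ^ 2 * (q ^ 2) ^ s =
        1 / ((q ^ 2) ^ (n + (s + 1) + 1) * ((q ^ 2) ^ (n + 1) * q ^ 2)) := by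
      rw [hb, div_pow, div_mul_eq_mul_div, div_eq_div_iff (pow_ne_zero _ (pow_ne_zero _ hp0))
        (mul_ne_zero (pow_ne_zero _ hp0) (mul_ne_zero (pow_ne_zero _ hp0) hp0))]
      ring
    rw [t1, t2] at hr
    rw [show (q ^ 2) ^ (n + (s + 1) + 1 + n + 1 + 1) =
      (q ^ 2) ^ (n + (s + 1) + 1) * ((q ^ 2) ^ (n + 1) * q ^ 2) by ring]
    rw [pow_succ (1 / (q * (q ^ 2) ^ (n + (s + 1) + 1))) n,
      pow_add (1 / (q * (q ^ 2) ^ (n + (s + 1) + 1))) n 2]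
    clear al e1 e2 e3 hb t1 t2
    generalize (1 / (q * (q ^ 2) ^ (n + (s + 1) + 1))) ^ n = T
    have hP : (q ^ 2) ^ (n + 1) ≠ 0 := pow_ne_zero _ hp0
    have hR : (q ^ 2) ^ (n + (s + 1) + 1) ≠ 0 := pow_ne_zero _ hp0
    generalize (1 - (q ^ 2) ^ (n + (s + 1) + 1 + n + 1)) = D
    generalize (q ^ 2) ^ (n + 1) = P at *
    generalize (q ^ 2) ^ (n + (s + 1) + 1) = R at *
    generalize qp (q ^ 2) (q ^ 2) (n + (s + 1) + 1 + n) = F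
    generalize (1 - (q ^ 2) ^ (s + 2)) = D3 at *
    calc _ = D / R * T * F * (D3 * C2) := by ring
      _ = _ := by rw [hr]; field_simp; ring

lemma alf_ne {q : ℂ} (hq : q ≠ 0) (hp : ∀ n : ℕ, (q ^ 2) ^ (n + 1) ≠ 1) {m k : ℕ} (h : m ≠ k) :
    alf q m - alf q k ≠ 0 := by
  have key : ∀ m s : ℕ, alf q m - alf q (m + s + 1) ≠ 0 := by
    intro m s
    have al : alf q m - alf q (m + s + 1) =
        -(1 - (q ^ 2) ^ (s + 1)) * (1 - (q ^ 2) ^ (m + s + m + 1 + 1)) / (q ^ 2) ^ (m + s + 1) := by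
      unfold alf
      simp only [pow_add]
      field_simp
      ring
    rw [al]
    exact div_ne_zero (mul_ne_zero (neg_ne_zero.mpr (sub_ne_zero.mpr (hp _).symm))
      (sub_ne_zero.mpr (hp _).symm)) (pow_ne_zero _ (pow_ne_zero _ hq))
  rcases lt_or_gt_of_ne h with h | h
  · obtain ⟨s, rfl⟩ : ∃ s, k = m + s + 1 := ⟨k - m - 1, by omega⟩
    exact key m s
  · obtain ⟨s, rfl⟩ : ∃ s, m = k + s + 1 := ⟨m - k - 1, by omega⟩
    intro h'
    apply key k s
    linear_combination -h'

lemma biorth {q : ℂ} (hq : q ≠ 0) (hp : ∀ n : ℕ, (q ^ 2) ^ (n + 1) ≠ 1) (z : ℂ) (hz : z ≠ 0)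
    (L m k : ℕ) (hk : k ≤ L) (h : m ≠ k) :
    ∑ n ∈ Finset.range (L + 1), lvf q z m n * vvf q z k n = 0 := by
  have hb := biorth_abs (lvf q z m) (vvf q z k) (alf q) (gaf q z) (bef q) (alf q m) (alf q k)
    (by simp [gaf]) (lvf_rec hq hp z hz m) (vvf_rec hq hp z hz k) L
  have e1 : vvf q z k (L + 1) = 0 := if_neg (by omega)
  have e2 : vvf q z k (L + 2) = 0 := if_neg (by omega)
  rw [e1, e2] at hb
  simp only [mul_zero, ite_self, add_zero, neg_zero] at hb
  exact (mul_eq_zero.mp hb).resolve_left (alf_ne hq hp h)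

lemma biorth_diag {q : ℂ} (hq : q ≠ 0) (hp : ∀ n : ℕ, (q ^ 2) ^ (n + 1) ≠ 1) (z : ℂ)
    (L k : ℕ) (hk : k ≤ L) :
    ∑ n ∈ Finset.range (L + 1), lvf q z k n * vvf q z k n =
      q ^ k / qp (q ^ 2) (q ^ 2) (2 * k + 1) * ((1 / (q * (q ^ 2) ^ k)) ^ k * qp (q ^ 2) (q ^ 2) (2 * k)) := by
  rw [Finset.sum_eq_single k]
  · unfold lvf vvf
    rw [if_pos le_rfl, if_pos le_rfl, Nat.sub_self, ← two_mul]
    have hC : ∀ p β, Chat p β 0 z = 1 := by intro p β; simp [Chat, qp]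
    rw [hC, hC, mul_one, mul_one]
  · intro n _ hn
    unfold lvf vvf
    split_ifs
    · omega
    all_goals simp
  · intro h
    rw [Finset.mem_range] at h
    omega

lemma Qf_zero' {q : ℂ} (hq : q ≠ 0) (hp : ∀ n : ℕ, (q ^ 2) ^ (n + 1) ≠ 1) (L : ℕ) (z : ℂ)
    (j k : ℕ) (hj : j ≤ L) :
    Qf q L z 0 j k = q ^ (-(k : ℤ)) * qp (q ^ 2) (q ^ 2) (2 * k + 1) /
      qp (q ^ 2) (q ^ 2) k * qp (q ^ 2) (q ^ 2) j * lvf q z k j := by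
  by_cases h : k ≤ j
  · rw [Qf_zero hq hp L z j k h hj, lvf, if_pos h]
    ring
  · rw [lvf, if_neg h, Qf, if_neg (by omega), mul_zero]

lemma Uf_eq {q : ℂ} (hq : q ≠ 0) (z : ℂ) (n k : ℕ) :
    (if n ≤ k then Uf q z n k else 0) = q ^ ((2 * (k : ℤ) + 1) * k) * qp (q ^ 2) (q ^ 2) k /
      qp (q ^ 2) (q ^ 2) (2 * k) / qp (q ^ 2) (q ^ 2) n * vvf q z k n := by
  unfold vvf Uf
  split_ifs with h
  · have : q ^ ((2 * (k : ℤ) + 1) * ((k : ℤ) - (n : ℤ))) =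
      q ^ ((2 * (k : ℤ) + 1) * k) * (1 / (q * (q ^ 2) ^ k)) ^ n := by
      rw [mul_sub, zpow_sub₀ hq, div_pow, one_pow, div_eq_mul_one_div]
      congr 2
      rw [← pow_mul, ← pow_succ', ← pow_mul, ← zpow_natCast]
      congr 1
    rw [this]
    ring
  · rw [mul_zero]

lemma P0_eq {q : ℂ} (hq : q ≠ 0) (hp : ∀ n : ℕ, (q ^ 2) ^ (n + 1) ≠ 1) (L : ℕ)
    (C : ℂ → ℂ → ℕ → Polynomial ℂ) (hC : IsUltra C) (z : ℂ) (hz : z ≠ 0) :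
    evP q L C 0 ((z + z⁻¹) / 2) = 1 := by
  set U : Matrix (Fin (L + 1)) (Fin (L + 1)) ℂ :=
    Matrix.of fun i k => if (i : ℕ) ≤ (k : ℕ) then Uf q z i k else 0 with hU
  set V : Matrix (Fin (L + 1)) (Fin (L + 1)) ℂ :=
    Matrix.of fun k j => Qf q L z 0 (j : ℕ) (k : ℕ) with hV
  have h1 : evP q L C 0 ((z + z⁻¹) / 2) = U * V := by
    ext i j
    rw [evP_entry hq hp L C hC z hz, Matrix.mul_apply]
    simp only [hU, hV, Matrix.of_apply]
    rw [Fin.sum_univ_eq_sum_range (fun k => (if (i : ℕ) ≤ k then Uf q z i k else 0) * Qf q L z 0 j k)]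
    refine Eq.trans (Finset.sum_congr rfl fun k hk => ?_)
      (Finset.sum_subset (s₁ := Finset.Icc (i : ℕ) L) ?_ ?_)
    · rw [Finset.mem_Icc] at hk
      rw [if_pos hk.1]
    · intro k hk
      rw [Finset.mem_Icc] at hk
      rw [Finset.mem_range]
      omega
    · intro k hk hk2
      rw [Finset.mem_range] at hk
      rw [Finset.mem_Icc] at hk2
      rw [if_neg (by omega), zero_mul]
  have h2 : V * U = 1 := by
    ext m k
    rw [Matrix.mul_apply]
    simp only [hU, hV, Matrix.of_apply]
    rw [Fin.sum_univ_eq_sum_range (fun n => Qf q L z 0 n m * (if n ≤ (k : ℕ) then Uf q z n k else 0))]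
    have h3 : ∀ n ∈ Finset.range (L + 1), Qf q L z 0 n m * (if n ≤ (k : ℕ) then Uf q z n k else 0) =
        (q ^ (-((m : ℕ) : ℤ)) * qp (q ^ 2) (q ^ 2) (2 * m + 1) / qp (q ^ 2) (q ^ 2) m *
        (q ^ ((2 * ((k : ℕ) : ℤ) + 1) * (k : ℕ)) * qp (q ^ 2) (q ^ 2) k /
          qp (q ^ 2) (q ^ 2) (2 * k))) * (lvf q z m n * vvf q z k n) := by
      intro n hn
      rw [Finset.mem_range] at hn
      rw [Qf_zero' hq hp L z n m (by omega), Uf_eq hq]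
      have := F_ne hp n
      field_simp
    rw [Finset.sum_congr rfl h3, ← Finset.mul_sum]
    by_cases hmk : m = k
    · subst hmk
      rw [biorth_diag hq hp z L m (by omega), Matrix.one_apply_eq]
      have n1 := F_ne hp m
      have n2 := F_ne hp (2 * m)
      have n3 := F_ne hp (2 * m + 1)
      have t1 : q ^ ((2 * ((m : ℕ) : ℤ) + 1) * (m : ℕ)) * (1 / (q * (q ^ 2) ^ (m : ℕ))) ^ (m : ℕ) = 1 := by
        have e : q ^ ((2 * ((m : ℕ) : ℤ) + 1) * (m : ℕ)) = (q * (q ^ 2) ^ (m : ℕ)) ^ (m : ℕ) := by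
          rw [← pow_mul, ← pow_succ', ← pow_mul, ← zpow_natCast]
          congr 1
        rw [e, ← mul_pow, mul_one_div_cancel (mul_ne_zero hq (pow_ne_zero _ (pow_ne_zero _ hq))), one_pow]
      have t2 : q ^ (-((m : ℕ) : ℤ)) * q ^ (m : ℕ) = 1 := by
        rw [_root_.zpow_neg, zpow_natCast]
        exact inv_mul_cancel₀ (pow_ne_zero _ hq)
      generalize q ^ ((2 * ((m : ℕ) : ℤ) + 1) * (m : ℕ)) = E1 at *
      generalize (1 / (q * (q ^ 2) ^ (m : ℕ))) ^ (m : ℕ) = E2 at *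
      generalize q ^ (-((m : ℕ) : ℤ)) = E3 at *
      generalize q ^ (m : ℕ) = E4 at *
      calc _ = (E3 * E4) * (E1 * E2) := by field_simp
        _ = 1 := by rw [t1, t2, one_mul]
    · rw [biorth hq hp z hz L m k (by omega) (fun h => hmk (Fin.ext h)), mul_zero,
        Matrix.one_apply_ne hmk]
  rw [h1]
  exact mul_eq_one_comm.mp h2

lemma B_sum {q : ℂ} (hq : q ≠ 0) (L n : ℕ) (g : ℕ → ℂ) (j : Fin (L + 1)) :
    ∑ l : Fin (L + 1), g l * Bmat q L n l j =
      g ((j : ℕ) - 1) * (q * (q ^ 2) ^ n / 2 * ((1 - (q ^ 2) ^ ((L : ℤ) - (j : ℕ) + 1)) * (1 - (q ^ 2) ^ (j : ℕ))) /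
        ((1 - (q ^ 2) ^ (n + (j : ℕ) + 1)) * (1 - (q ^ 2) ^ ((L : ℤ) - (j : ℕ) + n + 1)))) +
      g ((j : ℕ) + 1) * (q * (q ^ 2) ^ n / 2 * ((1 - (q ^ 2) ^ ((j : ℕ) + 1)) * (1 - (q ^ 2) ^ ((L : ℤ) - (j : ℕ)))) /
        ((1 - (q ^ 2) ^ (n + (j : ℕ) + 1)) * (1 - (q ^ 2) ^ ((L : ℤ) - (j : ℕ) + n + 1)))) := by
  obtain ⟨j, hj⟩ := j
  simp only [Bmat, Matrix.of_apply]
  set t1 := (q * (q ^ 2) ^ n / 2 * ((1 - (q ^ 2) ^ ((L : ℤ) - j + 1)) * (1 - (q ^ 2) ^ j)) /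
        ((1 - (q ^ 2) ^ (n + j + 1)) * (1 - (q ^ 2) ^ ((L : ℤ) - j + n + 1)))) with ht1
  set t2 := (q * (q ^ 2) ^ n / 2 * ((1 - (q ^ 2) ^ (j + 1)) * (1 - (q ^ 2) ^ ((L : ℤ) - j))) /
        ((1 - (q ^ 2) ^ (n + j + 1)) * (1 - (q ^ 2) ^ ((L : ℤ) - j + n + 1)))) with ht2
  have hodd : q ^ (2 * n + 1) = q * (q ^ 2) ^ n := by rw [pow_succ', pow_mul]
  have hterm : ∀ l : Fin (L + 1), g l * (if j = (l : ℕ) + 1 then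
      q ^ (2 * n + 1) / 2 *
          ((1 - q ^ (2 * (L : ℤ) - 2 * ((l : ℕ) : ℤ))) * (1 - q ^ (2 * ((l : ℕ) : ℤ) + 2))) /
        ((1 - q ^ (2 * (L : ℤ) + 2 * (n : ℤ) - 2 * ((l : ℕ) : ℤ))) *
          (1 - q ^ (2 * (n : ℤ) + 2 * ((l : ℕ) : ℤ) + 4)))
    else if (l : ℕ) = j + 1 then
      q ^ (2 * n + 1) / 2 *
          ((1 - q ^ (2 * ((l : ℕ) : ℤ))) * (1 - q ^ (2 * (L : ℤ) - 2 * ((l : ℕ) : ℤ) + 2))) /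
        ((1 - q ^ (2 * (n : ℤ) + 2 * ((l : ℕ) : ℤ))) *
          (1 - q ^ (2 * (L : ℤ) - 2 * ((l : ℕ) : ℤ) + 2 * (n : ℤ) + 4)))
    else 0) = (if j = (l : ℕ) + 1 then g (j - 1) * t1 else 0) +
      (if (l : ℕ) = j + 1 then g (j + 1) * t2 else 0) := by
    intro l
    by_cases h1 : j = (l : ℕ) + 1
    · rw [if_pos h1, if_pos h1, if_neg (by omega), add_zero, show j - 1 = (l : ℕ) by omega, ht1, hodd]
      congr 1
      subst h1
      simp only [qz, qn]
      push_cast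
      rw [mul_comm (1 - q ^ (2 * ((n : ℤ) + ((l : ℕ) + 1) + 1)))]
      congr 1 <;> congr 1 <;> congr 1 <;> congr 2 <;> ring
    · rw [if_neg h1, if_neg h1, zero_add]
      by_cases h2 : (l : ℕ) = j + 1
      · rw [if_pos h2, if_pos h2, h2, ht2, hodd]
        congr 1
        simp only [qz, qn]
        push_cast
        congr 1 <;> congr 1 <;> congr 1 <;> congr 2 <;> ring
      · rw [if_neg h2, if_neg h2, mul_zero]
  rw [Finset.sum_congr rfl fun l _ => hterm l, Finset.sum_add_distrib]
  congr 1
  · rcases j with _ | j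
    · simp [ht1]
    · rw [Finset.sum_eq_single ⟨j, by omega⟩]
      · simp
      · intro b _ hb
        rw [if_neg]
        intro h
        apply hb
        ext
        simp
        omega
      · simp
  · by_cases hL : j + 1 ≤ L
    · rw [Finset.sum_eq_single ⟨j + 1, by omega⟩]
      · simp
      · intro b _ hb
        rw [if_neg]
        intro h
        apply hb
        ext
        simp
        omega
      · simp
    · have : j = L := by omega
      subst this
      rw [ht2]
      simp

lemma rec_eq {q : ℂ} (hq : q ≠ 0) (hp : ∀ n : ℕ, (q ^ 2) ^ (n + 1) ≠ 1) (L : ℕ)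
    (C : ℂ → ℂ → ℕ → Polynomial ℂ) (hC : IsUltra C) (z : ℂ) (hz : z ≠ 0) (n : ℕ) :
    ((z + z⁻¹) / 2) • evP q L C n ((z + z⁻¹) / 2) =
          evP q L C (n + 1) ((z + z⁻¹) / 2) * Amat q L n +
            evP q L C n ((z + z⁻¹) / 2) * Bmat q L n +
            (if n = 0 then 0 else evP q L C (n - 1) ((z + z⁻¹) / 2)) * Cmat q L n := by
  ext i j
  have hB : (evP q L C n ((z + z⁻¹) / 2) * Bmat q L n) i j = ∑ l : Fin (L + 1),
      (fun l : ℕ => ∑ k ∈ Finset.Icc (i : ℕ) L, Uf q z i k * Qf q L z n l k) l * Bmat q L n l j := by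
    rw [Matrix.mul_apply]
    refine Finset.sum_congr rfl fun l _ => ?_
    rw [evP_entry hq hp L C hC z hz]
  have hCm : ((if n = 0 then 0 else evP q L C (n - 1) ((z + z⁻¹) / 2)) * Cmat q L n) i j =
      (∑ k ∈ Finset.Icc (i : ℕ) L, Uf q z i k * Qf q L z (n - 1) j k) *
        (q / 2 * ((1 - (q ^ 2) ^ n) * (1 - (q ^ 2) ^ (L + n + 1))) /
        ((1 - (q ^ 2) ^ (n + (j : ℕ) + 1)) * (1 - (q ^ 2) ^ ((L : ℤ) - (j : ℕ) + n + 1)))) := by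
    split_ifs with h
    · rw [h]; simp
    · rw [Cmat, Matrix.mul_diagonal, evP_entry hq hp L C hC z hz]
      congr 1
      simp only [qz, qn]
      push_cast
      congr 1 <;> congr 1 <;> congr 1 <;> congr 2 <;> ring
  rw [B_sum hq L n (fun l : ℕ => ∑ k ∈ Finset.Icc (i : ℕ) L, Uf q z i k * Qf q L z n l k) j] at hB
  rw [Matrix.add_apply, Matrix.add_apply, hB, hCm, Amat, Matrix.mul_diagonal, Matrix.smul_apply,
    evP_entry hq hp L C hC z hz, evP_entry hq hp L C hC z hz, smul_eq_mul]
  have hA : 1 / (2 * q) * ((1 - q ^ (2 * (n : ℤ) + 2)) * (1 - q ^ (2 * (L : ℤ) + 2 * (n : ℤ) + 4))) /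
      ((1 - q ^ (2 * ((j : ℕ) : ℤ) + 2 * (n : ℤ) + 2)) *
        (1 - q ^ (2 * (L : ℤ) - 2 * ((j : ℕ) : ℤ) + 2 * (n : ℤ) + 2))) =
      (1 / (2 * q) * ((1 - (q ^ 2) ^ (n + 1)) * (1 - (q ^ 2) ^ (L + n + 2))) /
        ((1 - (q ^ 2) ^ (n + (j : ℕ) + 1)) * (1 - (q ^ 2) ^ ((L : ℤ) - (j : ℕ) + n + 1)))) := by
    simp only [qz, qn]
    push_cast
    congr 1 <;> congr 1 <;> congr 1 <;> congr 2 <;> ring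
  rw [hA]
  simp only [Finset.mul_sum, Finset.sum_mul, ← Finset.sum_add_distrib]
  refine Finset.sum_congr rfl fun k hk => ?_
  rw [Finset.mem_Icc] at hk
  have hr := Qf_rec hq hp L z hz n j k (by omega) hk.2
  rw [mul_left_comm, hr]
  ring

/-- `P_0 = I` and the three-term recurrence
`x P_n(x) = P_{n+1}(x) A_n + P_n(x) B_n + P_{n-1}(x) C_n` (with `P_{-1} := 0`). -/
theorem stmt3 (q : ℝ) (hq0 : 0 < q) (hq1 : q < 1) (L : ℕ)
    (C : ℂ → ℂ → ℕ → Polynomial ℂ) (hC : IsUltra C) :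
    (∀ x : ℂ, evP (q : ℂ) L C 0 x = 1) ∧
      ∀ (n : ℕ) (x : ℂ),
        x • evP (q : ℂ) L C n x =
          evP (q : ℂ) L C (n + 1) x * Amat (q : ℂ) L n +
            evP (q : ℂ) L C n x * Bmat (q : ℂ) L n +
            (if n = 0 then 0 else evP (q : ℂ) L C (n - 1) x) * Cmat (q : ℂ) L n := by


  have hq : (q : ℂ) ≠ 0 := by exact_mod_cast hq0.ne'
  have hp : ∀ n : ℕ, ((q : ℂ) ^ 2) ^ (n + 1) ≠ 1 := by
    intro n h
    have h' : (q ^ 2) ^ (n + 1) = 1 := by exact_mod_cast h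
    have h2 : (q ^ 2) ^ (n + 1) < 1 :=
      pow_lt_one₀ (by positivity) (by nlinarith) (by omega)
    linarith
  constructor
  · intro x
    obtain ⟨z, hz, rfl⟩ := exists_z x
    exact P0_eq hq hp L C hC z hz
  · intro n x
    obtain ⟨z, hz, rfl⟩ := exists_z x
    exact rec_eq hq hp L C hC z hz n

end
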